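/- arXiv:1509.05246 — 2 statements merged into one kernel-verified Lean document; each statement's English description precedes it below -/
import Mathlib

section
/- Let (X,T) be a minimal topological dynamical system given by a continuous ℤ^d-action on a compact metric space and let f ∈ C(X). Then (X,T) is either f-mean equicontinuous or f-mean sensitive. -/
open MeasureTheory Filter Finset Metric
open scoped Classical

noncomputable section

/-- The box `{0,…,n−1}^d` inside `ℤ^d`. -/
def Fbox (d n : ℕ) : Finset (Fin d → ℤ) :=
  Fintype.piFinset fun _ => Finset.Icc (0 : ℤ) ((n : ℤ) - 1)

/-- Upper density of a subset of `ℤ^d` along the boxes `F_n`. -/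
def upperDensity (d : ℕ) (S : Set (Fin d → ℤ)) : ℝ :=
  Filter.limsup
    (fun n : ℕ => (((Fbox d n).filter (fun j => j ∈ S)).card : ℝ) / ((Fbox d n).card : ℝ))
    Filter.atTop

/-- Lower density of a subset of `ℤ^d` along the boxes `F_n`. -/
def lowerDensity (d : ℕ) (S : Set (Fin d → ℤ)) : ℝ :=
  Filter.liminf
    (fun n : ℕ => (((Fbox d n).filter (fun j => j ∈ S)).card : ℝ) / ((Fbox d n).card : ℝ))
    Filter.atTop

variable {X : Type*}

/-- The pseudometric `ρ_f(x,y) = inf {ε > 0 : D̄({i : |f(T^i x) − f(T^i y)| > ε}) < ε}`. -/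
def rhoF {d : ℕ} (T : (Fin d → ℤ) → X → X) (f : X → ℂ) (x y : X) : ℝ :=
  sInf {ε : ℝ | 0 < ε ∧ upperDensity d {i | ε < ‖f (T i x) - f (T i y)‖} < ε}

lemma card_Fbox (d n : ℕ) : (Fbox d n).card = n ^ d := by
  simp [Fbox, Fintype.card_piFinset]

/-- Fraction of points of the box staying well inside under the shift by `j`. -/
lemma inner_tendsto (d : ℕ) (j : Fin d → ℤ) :
    Tendsto (fun n : ℕ => ((Fintype.piFinset fun k => Finset.Icc |j k| ((n : ℤ) - 1 - |j k|)).card : ℝ)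
      / ((Fbox d n).card : ℝ)) atTop (nhds 1) := by
  have h1 : ∀ k : Fin d, Tendsto (fun n : ℕ => (((n : ℤ) - 1 - |j k| + 1 - |j k|).toNat : ℝ) / (n : ℝ))
      atTop (nhds 1) := by
    intro k
    have h2 : Tendsto (fun n : ℕ => 1 - (2 * |(j k : ℝ)|) / (n : ℝ)) atTop (nhds (1 - 0)) :=
      tendsto_const_nhds.sub (tendsto_const_div_atTop_nhds_zero_nat _)
    rw [sub_zero] at h2
    refine h2.congr' ?_
    filter_upwards [eventually_ge_atTop ((2 * |j k|).toNat + 1)] with n hn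
    have hn0 : (n : ℝ) ≠ 0 := by
      have : n ≠ 0 := by omega
      exact_mod_cast this
    have h3 : (((n : ℤ) - 1 - |j k| + 1 - |j k|).toNat : ℤ) = (n : ℤ) - 2 * |j k| := by omega
    have h4 : (((n : ℤ) - 1 - |j k| + 1 - |j k|).toNat : ℝ) = (n : ℝ) - 2 * |(j k : ℝ)| := by
      rw [← Int.cast_natCast, h3]
      push_cast
      rfl
    rw [h4]
    field_simp
  have h5 := tendsto_finsetProd (Finset.univ : Finset (Fin d)) (fun k _ => h1 k)
  rw [Finset.prod_const_one] at h5
  refine h5.congr ?_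
  intro n
  rw [card_Fbox, Fintype.card_piFinset, Finset.prod_div_distrib]
  simp

lemma frac_nonneg (d n : ℕ) (S : Set (Fin d → ℤ)) :
    0 ≤ (((Fbox d n).filter (fun j => j ∈ S)).card : ℝ) / ((Fbox d n).card : ℝ) := by positivity

lemma frac_le_one (d n : ℕ) (S : Set (Fin d → ℤ)) :
    (((Fbox d n).filter (fun j => j ∈ S)).card : ℝ) / ((Fbox d n).card : ℝ) ≤ 1 := by
  apply div_le_one_of_le₀ _ (by positivity)
  exact_mod_cast Finset.card_filter_le _ _

lemma count_le (d n : ℕ) (S : Set (Fin d → ℤ)) (j : Fin d → ℤ) :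
    ((Fbox d n).filter (fun i => i ∈ S)).card +
      (Fintype.piFinset fun k => Finset.Icc |j k| ((n : ℤ) - 1 - |j k|)).card ≤
    ((Fbox d n).filter (fun i => i ∈ {i | i + j ∈ S})).card + (Fbox d n).card := by
  set P := Fintype.piFinset fun k => Finset.Icc |j k| ((n : ℤ) - 1 - |j k|) with hP
  set A := (Fbox d n).filter (fun i => i ∈ S) with hA
  have hPF : P ⊆ Fbox d n := by
    intro i hi
    simp only [hP, Fbox, Fintype.mem_piFinset, Finset.mem_Icc] at hi ⊢
    intro k
    have := hi k
    have := abs_nonneg (j k)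
    omega
  have h1 : (A ∩ P).card ≤ ((Fbox d n).filter (fun i => i ∈ {i | i + j ∈ S})).card := by
    apply Finset.card_le_card_of_injOn (fun i => i - j)
    · intro i hi
      simp only [hA, hP, Fbox, Finset.coe_inter, Set.mem_inter_iff, Finset.mem_coe,
        Finset.mem_filter, Fintype.mem_piFinset, Finset.mem_Icc] at hi
      simp only [Fbox, Finset.mem_coe, Finset.mem_filter, Fintype.mem_piFinset, Finset.mem_Icc,
        Set.mem_ofPred_eq, sub_add_cancel, Pi.sub_apply]
      refine ⟨fun k => ?_, hi.1.2⟩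
      have := hi.2 k
      have := le_abs_self (j k)
      have := neg_abs_le (j k)
      omega
    · intro a _ b _ h
      exact sub_left_injective h
  have h2 : (A ∪ P).card ≤ (Fbox d n).card :=
    Finset.card_le_card (Finset.union_subset (Finset.filter_subset _ _) hPF)
  have := Finset.card_union_add_card_inter A P
  omega

lemma upperDensity_le_shift (d : ℕ) (S : Set (Fin d → ℤ)) (j : Fin d → ℤ) :
    upperDensity d S ≤ upperDensity d {i | i + j ∈ S} := by
  have hb : ∀ S : Set (Fin d → ℤ), IsBoundedUnder (· ≤ ·) atTop (fun n : ℕ =>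
      (((Fbox d n).filter (fun j => j ∈ S)).card : ℝ) / ((Fbox d n).card : ℝ)) :=
    fun S => isBoundedUnder_of ⟨1, fun n => frac_le_one d n S⟩
  have hb' : ∀ S : Set (Fin d → ℤ), IsBoundedUnder (· ≥ ·) atTop (fun n : ℕ =>
      (((Fbox d n).filter (fun j => j ∈ S)).card : ℝ) / ((Fbox d n).card : ℝ)) :=
    fun S => isBoundedUnder_of ⟨0, fun n => frac_nonneg d n S⟩
  apply le_of_forall_pos_le_add
  intro η hη
  rw [← sub_le_iff_le_add]
  apply le_of_forall_gt_imp_ge_of_dense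
  intro c hc
  have h1 : ∀ᶠ n : ℕ in atTop, (((Fbox d n).filter (fun i => i ∈ {i | i + j ∈ S})).card : ℝ)
      / ((Fbox d n).card : ℝ) < c := eventually_lt_of_limsup_lt hc (hb _)
  have h2 := (inner_tendsto d j).eventually (lt_mem_nhds (show 1 - η < 1 by linarith))
  rw [sub_le_iff_le_add]
  apply limsup_le_of_le (hb' S).isCoboundedUnder_le
  filter_upwards [h1, h2, eventually_gt_atTop 0] with n hn1 hn2 hn
  have hpos : (0 : ℝ) < ((Fbox d n).card : ℝ) := by
    rw [card_Fbox]; positivity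
  have h3 : ((((Fbox d n).filter (fun i => i ∈ S)).card : ℝ) +
      ((Fintype.piFinset fun k => Finset.Icc |j k| ((n : ℤ) - 1 - |j k|)).card : ℝ)) ≤
    (((Fbox d n).filter (fun i => i ∈ {i | i + j ∈ S})).card : ℝ) + ((Fbox d n).card : ℝ) := by
    exact_mod_cast count_le d n S j
  have h4 := div_le_div_of_nonneg_right h3 hpos.le
  rw [add_div, add_div, div_self hpos.ne'] at h4
  have hn1' : (((Fbox d n).filter (fun i => i ∈ {i | i + j ∈ S})).card : ℝ)
      / ((Fbox d n).card : ℝ) < c := hn1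
  linarith

lemma upperDensity_shift (d : ℕ) (S : Set (Fin d → ℤ)) (j : Fin d → ℤ) :
    upperDensity d {i | i + j ∈ S} = upperDensity d S := by
  apply le_antisymm _ (upperDensity_le_shift d S j)
  have := upperDensity_le_shift d {i | i + j ∈ S} (-j)
  simpa using this

lemma rhoF_shift {d : ℕ} (T : (Fin d → ℤ) → X → X)
    (hTadd : ∀ i j, T (i + j) = T i ∘ T j) (f : X → ℂ) (j : Fin d → ℤ) (x y : X) :
    rhoF T f (T j x) (T j y) = rhoF T f x y := by
  unfold rhoF
  congr 1
  ext ε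
  have := upperDensity_shift d {i | ε < ‖f (T i x) - f (T i y)‖} j
  simp only [Set.mem_ofPred_eq, hTadd, Function.comp] at this ⊢
  rw [this]

/-- a minimal TDS is either `f`-mean equicontinuous or `f`-mean sensitive. -/
theorem stmt11 {d : ℕ}
    [MetricSpace X] [CompactSpace X]
    (T : (Fin d → ℤ) → X → X)
    (hTc : ∀ j, Continuous (T j))
    (hTadd : ∀ i j, T (i + j) = T i ∘ T j)
    (hmin : ∀ x : X, Dense (Set.range fun j : Fin d → ℤ => T j x))
    (f : X → ℂ) (hf : Continuous f) :
    (∀ x : X, ∀ ε : ℝ, 0 < ε → ∃ δ : ℝ, 0 < δ ∧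
        ∀ y : X, dist x y ≤ δ → rhoF T f x y ≤ ε) ∨
    (∃ ε : ℝ, 0 < ε ∧ ∀ U : Set X, IsOpen U → U.Nonempty →
        ∃ x ∈ U, ∃ y ∈ U, ε < rhoF T f x y) := by
  by_contra hcon
  rw [not_or] at hcon
  obtain ⟨h1, h2⟩ := hcon
  apply h1
  intro x ε hε
  push Not at h2
  obtain ⟨U, hU, hUne, hUε⟩ := h2 ε hε
  obtain ⟨_, hz, j, rfl⟩ := (hmin x).inter_open_nonempty U hU hUne
  have hV : T j ⁻¹' U ∈ nhds x := (hU.preimage (hTc j)).mem_nhds hz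
  obtain ⟨δ, hδ, hsub⟩ := Metric.nhds_basis_closedBall.mem_iff.1 hV
  refine ⟨δ, hδ, fun y hy => ?_⟩
  rw [← rhoF_shift T hTadd f j x y]
  exact hUε _ hz _ (hsub (by rwa [Metric.mem_closedBall, dist_comm]))
end
end

section
/- Let (X,T) be a topological dynamical system given by a continuous ℤ^d-action on a compact metric space, let μ be an ergodic T-invariant Borel probability measure, and let f ∈ L²(X,μ). The following are equivalent: (1) (X,T) is μ-f-mean sensitive; (2) (X,T) is μ-f-mean expansive; (3) there exists ε > 0 such that for μ-almost every x, μ({y : d_f(x,y) ≤ ε}) = 0; (4) (X,T) is not μ-f-mean equicontinuous. -/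
open MeasureTheory Filter Finset Metric
open scoped Classical

noncomputable section

variable {X : Type*}

/-- The pseudometric `d_f(x,y) = limsup_n ((1/|F_n|) Σ_{j∈F_n} |f(T^j x) − f(T^j y)|²)^{1/2}`. -/
def dF {d : ℕ} (T : (Fin d → ℤ) → X → X) (f : X → ℂ) (x y : X) : ℝ :=
  Filter.limsup (fun n : ℕ =>
    Real.sqrt ((∑ j ∈ Fbox d n, ‖f (T j x) - f (T j y)‖ ^ 2) / ((Fbox d n).card : ℝ)))
    Filter.atTop

/-- `x` is a generic point for `|f|²`:
the Birkhoff averages of `|f|²` along `x` converge to `∫ |f|² dμ`. -/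
def genericSq {d : ℕ} [MeasurableSpace X] (μ : Measure X) (T : (Fin d → ℤ) → X → X)
    (f : X → ℂ) (x : X) : Prop :=
  Filter.Tendsto
    (fun n : ℕ => (∑ j ∈ Fbox d n, ‖f (T j x)‖ ^ 2) / ((Fbox d n).card : ℝ))
    Filter.atTop (nhds (∫ y, ‖f y‖ ^ 2 ∂μ))

/-- `ε` is a `μ`-sensitivity constant for `f`: every positive measure set contains two
generic points `x, y` with `d_f(x,y) > ε`. -/
def SensitivityConstant {d : ℕ} [MeasurableSpace X] (μ : Measure X)
    (T : (Fin d → ℤ) → X → X) (f : X → ℂ) (ε : ℝ) : Prop :=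
  0 < ε ∧ ∀ A : Set X, MeasurableSet A → 0 < μ A →
    ∃ x ∈ A, ∃ y ∈ A, genericSq μ T f x ∧ genericSq μ T f y ∧ ε < dF T f x y

/-- `f` is `μ`-mean sensitive (`f ∈ H_ms`). -/
def MeanSensitiveFun {d : ℕ} [MeasurableSpace X] (μ : Measure X)
    (T : (Fin d → ℤ) → X → X) (f : X → ℂ) : Prop :=
  ∃ ε : ℝ, SensitivityConstant μ T f ε

/-- `f` is `μ`-mean expansive: for some `ε > 0`, `μ×μ {(x,y) : d_f(x,y) > ε} = 1`. -/
def MeanExpansiveFun {d : ℕ} [MeasurableSpace X] (μ : Measure X)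
    (T : (Fin d → ℤ) → X → X) (f : X → ℂ) : Prop :=
  ∃ ε : ℝ, 0 < ε ∧ (μ.prod μ) {p : X × X | ε < dF T f p.1 p.2} = 1

/-- `(X,T)` is `μ-f`-mean equicontinuous. -/
def MuFMeanEquicont {d : ℕ} [MetricSpace X] [MeasurableSpace X] (μ : Measure X)
    (T : (Fin d → ℤ) → X → X) (f : X → ℂ) : Prop :=
  ∀ τ : ℝ, 0 < τ → ∃ M : Set X, IsCompact M ∧ 1 - ENNReal.ofReal τ ≤ μ M ∧
    ∀ ε : ℝ, 0 < ε → ∃ δ : ℝ, 0 < δ ∧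
      ∀ x ∈ M, ∀ y ∈ M, dist x y ≤ δ → rhoF T f x y ≤ ε


lemma mem_Fbox {d n : ℕ} {j : Fin d → ℤ} : j ∈ Fbox d n ↔ ∀ k, 0 ≤ j k ∧ j k < n := by
  simp only [Fbox, Fintype.mem_piFinset, Finset.mem_Icc]
  refine forall_congr' fun k => and_congr_right fun _ => ?_
  omega

lemma vitali_count {d : ℕ} (a : (Fin d → ℤ) → ℝ) (ha : ∀ i, 0 ≤ a i) (N L : ℕ) (c : ℝ)
    (hc : 0 < c) (S : Finset (Fin d → ℤ)) (hSL : S ⊆ Fbox d L)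
    (hS : ∀ j ∈ S, ∃ n : ℕ, 1 ≤ n ∧ n ≤ N ∧ c * (n : ℝ) ^ d < ∑ i ∈ Fbox d n, a (i + j)) :
    c * S.card ≤ 3 ^ d * ∑ i ∈ Fbox d (L + N), a i := by
  choose! n hn1 hnN hn using hS
  let B : (Fin d → ℤ) → Finset (Fin d → ℤ) := fun j => (Fbox d (n j)).map (addRightEmbedding j)
  have hB : ∀ j i, i ∈ B j ↔ ∀ k, j k ≤ i k ∧ i k < j k + n j := by
    intro j i
    simp only [B, Finset.mem_map, addRightEmbedding_apply, mem_Fbox]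
    constructor
    · rintro ⟨b, hb, rfl⟩ k
      have := hb k
      simp only [Pi.add_apply]; omega
    · intro h
      refine ⟨i - j, fun k => ?_, by simp⟩
      have := h k
      simp only [Pi.sub_apply]; omega
  obtain ⟨u, huS, hdisj, hcov⟩ := Vitali.exists_disjoint_subfamily_covering_enlargement
    (fun j => (B j : Set (Fin d → ℤ))) (S : Set (Fin d → ℤ)) (fun j => (n j : ℝ)) 2 (by norm_num)
    (fun _ _ => by positivity) N (fun j hj => by exact_mod_cast hnN j hj)
    (fun j hj => ⟨j, by
      have := hn1 j hj
      simp only [Finset.mem_coe, hB]; intro k; omega⟩)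
  have hufin : u.Finite := S.finite_toSet.subset huS
  lift u to Finset (Fin d → ℤ) using hufin
  have huS' : u ⊆ S := by exact_mod_cast huS
  let C : (Fin d → ℤ) → Finset (Fin d → ℤ) := fun b =>
    (Fbox d (3 * n b)).map (addRightEmbedding (b - fun _ => (2 * n b : ℤ)))
  have hSC : S ⊆ u.biUnion C := by
    intro j hj
    obtain ⟨b, hbu, ⟨i, hi1, hi2⟩, hle⟩ := hcov j hj
    simp only [Finset.mem_coe, hB] at hi1 hi2
    have hle' : n j ≤ 2 * n b := by exact_mod_cast hle
    refine Finset.mem_biUnion.2 ⟨b, hbu, Finset.mem_map.2 ⟨j - (b - fun _ => (2 * n b : ℤ)), ?_, ?_⟩⟩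
    · rw [mem_Fbox]; intro k
      have := hi1 k; have := hi2 k
      simp only [Pi.sub_apply]; push_cast; omega
    · simp
  have h1 : S.card ≤ ∑ b ∈ u, (3 * n b) ^ d := by
    refine (Finset.card_le_card hSC).trans (Finset.card_biUnion_le.trans (le_of_eq ?_))
    refine Finset.sum_congr rfl fun b _ => ?_
    simp [C, card_Fbox]
  have h2 : ∑ b ∈ u, ∑ i ∈ B b, a i ≤ ∑ i ∈ Fbox d (L + N), a i := by
    rw [← Finset.sum_biUnion]
    · refine Finset.sum_le_sum_of_subset_of_nonneg ?_ (fun i _ _ => ha i)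
      intro i hi
      obtain ⟨b, hb, hib⟩ := Finset.mem_biUnion.1 hi
      rw [hB] at hib
      have hbL := mem_Fbox.1 (hSL (huS' hb))
      have := hnN b (huS' hb)
      rw [mem_Fbox]; intro k
      have := hib k; have := hbL k
      push_cast; omega
    · intro x hx y hy hxy
      have := hdisj hx hy hxy
      simpa [Function.onFun] using this
  have h3 : ∀ b ∈ u, c * ((3 * n b : ℕ) : ℝ) ^ d ≤ 3 ^ d * ∑ i ∈ B b, a i := by
    intro b hb
    have := (hn b (huS' hb)).le
    have e : ∑ i ∈ B b, a i = ∑ i ∈ Fbox d (n b), a (i + b) := by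
      simp [B, Finset.sum_map]
    rw [e]
    calc c * ((3 * n b : ℕ) : ℝ) ^ d = 3 ^ d * (c * (n b : ℝ) ^ d) := by push_cast; ring
      _ ≤ _ := by gcongr
  calc c * S.card ≤ c * ((∑ b ∈ u, (3 * n b) ^ d : ℕ) : ℝ) := by gcongr
    _ = ∑ b ∈ u, c * ((3 * n b : ℕ) : ℝ) ^ d := by push_cast; rw [Finset.mul_sum]
    _ ≤ ∑ b ∈ u, 3 ^ d * ∑ i ∈ B b, a i := Finset.sum_le_sum h3
    _ = 3 ^ d * ∑ b ∈ u, ∑ i ∈ B b, a i := by rw [Finset.mul_sum]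
    _ ≤ _ := by gcongr

/-- Ergodic averages. -/
def av {d : ℕ} (T : (Fin d → ℤ) → X → X) (u : X → ℝ) (n : ℕ) (x : X) : ℝ :=
  (∑ j ∈ Fbox d n, u (T j x)) / ((Fbox d n).card : ℝ)

lemma maximal_N {d : ℕ} [MeasurableSpace X] (T : (Fin d → ℤ) → X → X)
    (hTadd : ∀ i j, T (i + j) = T i ∘ T j)
    (μ : Measure X) [IsProbabilityMeasure μ] (hT : ∀ j, MeasurePreserving (T j) μ μ)
    (u : X → ℝ) (hu : Measurable u) (hu0 : ∀ x, 0 ≤ u x) (hui : Integrable u μ) (c : ℝ)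
    (hc : 0 < c) (N : ℕ) :
    c * μ.real {x | ∃ n : ℕ, 1 ≤ n ∧ n ≤ N ∧ c < av T u n x} ≤ 3 ^ d * ∫ x, u x ∂μ := by
  set E := {x | ∃ n : ℕ, 1 ≤ n ∧ n ≤ N ∧ c < av T u n x} with hE
  have hav : ∀ n, Measurable (av T u n) := by
    intro n
    unfold av
    exact (Finset.measurable_sum _ fun j _ => hu.comp (hT j).measurable).div_const _
  have hEm : MeasurableSet E := by
    have : E = ⋃ n : ℕ, ⋃ (_ : 1 ≤ n), ⋃ (_ : n ≤ N), {x | c < av T u n x} := by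
      ext x; simp only [hE, Set.mem_iUnion, Set.mem_ofPred_eq, exists_prop]
    rw [this]
    exact .iUnion fun n => .iUnion fun _ => .iUnion fun _ => measurableSet_lt measurable_const (hav n)
  have key : ∀ L : ℕ, (c * μ.real E) * (L : ℝ) ^ d ≤ (3 ^ d * ∫ x, u x ∂μ) * ((L : ℝ) + N) ^ d := by
    intro L
    have pt : ∀ x, c * ∑ j ∈ Fbox d L, E.indicator (fun _ => (1 : ℝ)) (T j x)
        ≤ 3 ^ d * ∑ i ∈ Fbox d (L + N), u (T i x) := by
      intro x
      have := vitali_count (fun i => u (T i x)) (fun i => hu0 _) N L c hc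
        ((Fbox d L).filter fun j => T j x ∈ E) (Finset.filter_subset _ _) (by
          intro j hj
          obtain ⟨n, h1, h2, h3⟩ := (Finset.mem_filter.1 hj).2
          refine ⟨n, h1, h2, ?_⟩
          unfold av at h3
          rw [card_Fbox, lt_div_iff₀ (by positivity)] at h3
          simpa [hTadd] using h3)
      refine le_trans (le_of_eq ?_) this
      congr 1
      simp [Set.indicator_apply]
    have hi1 : ∀ j, Integrable (fun x => E.indicator (fun _ => (1 : ℝ)) (T j x)) μ := fun j =>
      (hT j).integrable_comp_of_integrable ((integrable_const (1 : ℝ)).indicator hEm)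
    have hi2 : ∀ j, Integrable (fun x => u (T j x)) μ := fun j =>
      (hT j).integrable_comp_of_integrable hui
    have := integral_mono ((integrable_finsetSum _ fun j _ => hi1 j).const_mul c)
      ((integrable_finsetSum _ fun j _ => hi2 j).const_mul _) pt
    rw [integral_const_mul, integral_const_mul, integral_finsetSum _ fun j _ => hi1 j,
      integral_finsetSum _ fun j _ => hi2 j] at this
    have e1 : ∀ j, ∫ x, E.indicator (fun _ => (1 : ℝ)) (T j x) ∂μ = μ.real E := by
      intro j
      have := (hT j).map_eq
      have h2 := integral_map (hT j).measurable.aemeasurable (μ := μ) (f := E.indicator (fun _ => (1 : ℝ)))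
        ((measurable_const.indicator hEm).aestronglyMeasurable)
      rw [← h2, this, integral_indicator hEm]; simp
    have e2 : ∀ j, ∫ x, u (T j x) ∂μ = ∫ x, u x ∂μ := by
      intro j
      have h2 := integral_map (hT j).measurable.aemeasurable (μ := μ) hu.aestronglyMeasurable
      rw [← h2, (hT j).map_eq]
    simp only [e1, e2, Finset.sum_const, card_Fbox, nsmul_eq_mul] at this
    push_cast at this
    linarith
  have lim : Tendsto (fun L : ℕ => (3 ^ d * ∫ x, u x ∂μ) * (1 + (N : ℝ) / L) ^ d) atTop
      (nhds ((3 ^ d * ∫ x, u x ∂μ) * (1 + 0) ^ d)) :=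
    ((tendsto_const_nhds.add (tendsto_const_div_atTop_nhds_zero_nat (N : ℝ))).pow d).const_mul _
  have := ge_of_tendsto lim (b := c * μ.real E) (by
    filter_upwards [eventually_gt_atTop 0] with L hL
    have hL' : (0 : ℝ) < L := by exact_mod_cast hL
    have k := key L
    have : ((L : ℝ) + N) ^ d = (1 + (N : ℝ) / L) ^ d * (L : ℝ) ^ d := by
      rw [← mul_pow]; congr 1; field_simp
    rw [this, ← mul_assoc] at k
    exact le_of_mul_le_mul_right k (by positivity))
  simpa using this

lemma maximal {d : ℕ} [MeasurableSpace X] (T : (Fin d → ℤ) → X → X)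
    (hTadd : ∀ i j, T (i + j) = T i ∘ T j)
    (μ : Measure X) [IsProbabilityMeasure μ] (hT : ∀ j, MeasurePreserving (T j) μ μ)
    (u : X → ℝ) (hu : Measurable u) (hu0 : ∀ x, 0 ≤ u x) (hui : Integrable u μ) (c : ℝ)
    (hc : 0 < c) :
    c * μ.real {x | ∃ n : ℕ, 1 ≤ n ∧ c < av T u n x} ≤ 3 ^ d * ∫ x, u x ∂μ := by
  have hU : {x | ∃ n : ℕ, 1 ≤ n ∧ c < av T u n x} =
      ⋃ N : ℕ, {x | ∃ n : ℕ, 1 ≤ n ∧ n ≤ N ∧ c < av T u n x} := by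
    ext x; simp only [Set.mem_ofPred_eq, Set.mem_iUnion]
    constructor
    · rintro ⟨n, h1, h2⟩; exact ⟨n, n, h1, le_rfl, h2⟩
    · rintro ⟨_, n, h1, _, h2⟩; exact ⟨n, h1, h2⟩
  have hm : Monotone fun N : ℕ => {x | ∃ n : ℕ, 1 ≤ n ∧ n ≤ N ∧ c < av T u n x} := by
    rintro a b hab x ⟨n, h1, h2, h3⟩
    exact ⟨n, h1, h2.trans hab, h3⟩
  have lim := tendsto_measure_iUnion_atTop (μ := μ) hm
  rw [← hU] at lim
  have lim' := ((ENNReal.tendsto_toReal (measure_ne_top μ _)).comp lim).const_mul c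
  exact le_of_tendsto' lim' fun N => maximal_N T hTadd μ hT u hu hu0 hui c hc N


lemma av_sub {d : ℕ} (T : (Fin d → ℤ) → X → X) (u v : X → ℝ) (n : ℕ) (x : X) :
    av T (fun x => u x - v x) n x = av T u n x - av T v n x := by
  simp [av, Finset.sum_sub_distrib, sub_div]

lemma av_add {d : ℕ} (T : (Fin d → ℤ) → X → X) (u v : X → ℝ) (n : ℕ) (x : X) :
    av T (fun x => u x + v x) n x = av T u n x + av T v n x := by
  simp [av, Finset.sum_add_distrib, add_div]

lemma abs_av_le {d : ℕ} (T : (Fin d → ℤ) → X → X) (u : X → ℝ) (n : ℕ) (x : X) :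
    |av T u n x| ≤ av T (fun x => |u x|) n x := by
  unfold av
  rw [abs_div, abs_of_nonneg (by positivity : (0 : ℝ) ≤ ((Fbox d n).card : ℝ))]
  gcongr
  exact Finset.abs_sum_le_sum_abs _ _

/-- The pointwise ergodic theorem holds for `u`. -/
def GoodE {d : ℕ} [MeasurableSpace X] (T : (Fin d → ℤ) → X → X) (μ : Measure X) (u : X → ℝ) : Prop :=
  ∀ᵐ x ∂μ, Tendsto (fun n => av T u n x) atTop (nhds (∫ y, u y ∂μ))

lemma ae_all_T {d : ℕ} [MeasurableSpace X] {T : (Fin d → ℤ) → X → X} {μ : Measure X}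
    (hT : ∀ j, MeasurePreserving (T j) μ μ) {p : X → Prop} (h : ∀ᵐ x ∂μ, p x) :
    ∀ᵐ x ∂μ, ∀ j, p (T j x) :=
  ae_all_iff.2 fun j => (hT j).quasiMeasurePreserving.ae h

lemma GoodE.congr {d : ℕ} [MeasurableSpace X] {T : (Fin d → ℤ) → X → X} {μ : Measure X}
    (hT : ∀ j, MeasurePreserving (T j) μ μ) {u v : X → ℝ} (h : u =ᵐ[μ] v) (hu : GoodE T μ u) :
    GoodE T μ v := by
  unfold GoodE at *
  rw [← integral_congr_ae h]
  filter_upwards [hu, ae_all_T hT h] with x hx hx2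
  refine hx.congr fun n => ?_
  simp [av, hx2]

lemma GoodE.add {d : ℕ} [MeasurableSpace X] {T : (Fin d → ℤ) → X → X} {μ : Measure X}
    {u v : X → ℝ} (hu : GoodE T μ u) (hv : GoodE T μ v) (hui : Integrable u μ)
    (hvi : Integrable v μ) : GoodE T μ (fun x => u x + v x) := by
  unfold GoodE at *
  rw [integral_add hui hvi]
  filter_upwards [hu, hv] with x h1 h2
  simpa only [av_add] using h1.add h2

lemma GoodE.const_mul {d : ℕ} [MeasurableSpace X] {T : (Fin d → ℤ) → X → X} {μ : Measure X}
    {u : X → ℝ} (c : ℝ) (hu : GoodE T μ u) : GoodE T μ (fun x => c * u x) := by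
  unfold GoodE at *
  rw [integral_const_mul]
  filter_upwards [hu] with x h1
  refine (h1.const_mul c).congr fun n => ?_
  simp [av, ← Finset.mul_sum, mul_div_assoc]

lemma goodE_const {d : ℕ} [MeasurableSpace X] (T : (Fin d → ℤ) → X → X) (μ : Measure X)
    [IsProbabilityMeasure μ] (c : ℝ) : GoodE T μ (fun _ => c) := by
  unfold GoodE
  refine ae_of_all _ fun x => ?_
  refine tendsto_const_nhds.congr' ?_
  filter_upwards [eventually_gt_atTop 0] with n hn
  have : (n : ℝ) ^ d ≠ 0 := by positivity
  simp [av, card_Fbox, this]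

lemma goodE_of_approx {d : ℕ} [MeasurableSpace X] (T : (Fin d → ℤ) → X → X)
    (hTadd : ∀ i j, T (i + j) = T i ∘ T j)
    (μ : Measure X) [IsProbabilityMeasure μ] (hT : ∀ j, MeasurePreserving (T j) μ μ)
    (u : X → ℝ) (hu : Measurable u) (hui : Integrable u μ)
    (H : ∀ ε : ℝ, 0 < ε → ∃ v : X → ℝ, Measurable v ∧ Integrable v μ ∧ GoodE T μ v ∧
      ∫ x, |u x - v x| ∂μ ≤ ε) : GoodE T μ u := by
  have key : ∀ ε : ℝ, 0 < ε → ∀ᵐ x ∂μ, ∀ᶠ n in atTop, |av T u n x - ∫ y, u y ∂μ| ≤ 3 * ε := by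
    intro ε hε
    rw [ae_iff]
    refine le_antisymm (ENNReal.le_of_forall_pos_le_add fun η hη _ => ?_) zero_le
    obtain ⟨v, hvm, hvi, hvg, hv⟩ := H (min ε (ε * η / 3 ^ d)) (by positivity)
    have hm := maximal T hTadd μ hT (fun x => |u x - v x|) (hu.sub hvm).abs (fun x => abs_nonneg _)
      (hui.sub hvi).abs ε hε
    have hIntg : |∫ y, v y ∂μ - ∫ y, u y ∂μ| ≤ ε := by
      rw [← integral_sub hvi hui]
      refine (abs_integral_le_integral_abs).trans ?_
      simp_rw [abs_sub_comm (v _)]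
      exact hv.trans (min_le_left _ _)
    have hle : μ {x | ¬ ∀ᶠ n in atTop, |av T u n x - ∫ y, u y ∂μ| ≤ 3 * ε} ≤
        μ {x | ∃ n : ℕ, 1 ≤ n ∧ ε < av T (fun x => |u x - v x|) n x} := by
      refine measure_mono_ae ?_
      filter_upwards [hvg] with x hx hxm
      by_contra hcon
      apply hxm
      have hcon' : ∀ n : ℕ, 1 ≤ n → av T (fun x => |u x - v x|) n x ≤ ε := by
        intro n hn
        by_contra h
        exact hcon ⟨n, hn, not_le.1 h⟩
      have := (Metric.tendsto_nhds.1 hx) ε hε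
      filter_upwards [this, eventually_ge_atTop 1] with n h1 h2
      rw [Real.dist_eq] at h1
      have h3 := (abs_av_le T (fun x => u x - v x) n x).trans (hcon' n h2)
      rw [av_sub] at h3
      rw [abs_le] at *
      rw [abs_lt] at h1
      constructor <;> linarith
    refine hle.trans ?_
    rw [zero_add]
    have h4 : μ.real {x | ∃ n : ℕ, 1 ≤ n ∧ ε < av T (fun x => |u x - v x|) n x} ≤ η := by
      have h5 : ε * μ.real {x | ∃ n : ℕ, 1 ≤ n ∧ ε < av T (fun x => |u x - v x|) n x} ≤ ε * η := by
        refine hm.trans ?_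
        calc (3 : ℝ) ^ d * ∫ x, |u x - v x| ∂μ ≤ 3 ^ d * (ε * η / 3 ^ d) := by
              gcongr; exact hv.trans (min_le_right _ _)
          _ = ε * η := by field_simp
      exact le_of_mul_le_mul_left h5 hε
    rw [measureReal_def] at h4
    rw [← ENNReal.ofReal_toReal (measure_ne_top μ _)]
    exact (ENNReal.ofReal_le_ofReal h4).trans (by simp)
  have key2 : ∀ᵐ x ∂μ, ∀ m : ℕ, ∀ᶠ n in atTop, |av T u n x - ∫ y, u y ∂μ| ≤ 3 * (1 / ((m : ℝ) + 1)) :=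
    ae_all_iff.2 fun m => key _ (by positivity)
  unfold GoodE
  filter_upwards [key2] with x hx
  rw [Metric.tendsto_nhds]
  intro ε hε
  obtain ⟨m, hm⟩ := exists_nat_one_div_lt (show 0 < ε / 3 by positivity)
  filter_upwards [hx m] with n hn
  rw [Real.dist_eq]
  linarith

lemma card_inter_ge {d : ℕ} (i : Fin d → ℤ) (K : ℕ) (hK : ∀ k, |i k| ≤ K) (n : ℕ) (hn : K ≤ n) :
    (n - K) ^ d ≤ (Fbox d n ∩ (Fbox d n).map (addRightEmbedding i)).card := by
  rw [← card_Fbox, ← Finset.card_map (addRightEmbedding (fun k => max (i k) 0))]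
  refine Finset.card_le_card ?_
  intro j hj
  obtain ⟨b, hb, rfl⟩ := Finset.mem_map.1 hj
  rw [mem_Fbox] at hb
  refine Finset.mem_inter.2 ⟨?_, Finset.mem_map.2 ⟨b + (fun k => max (i k) 0) - i, ?_, by simp⟩⟩
  · rw [mem_Fbox]; intro k
    have h1 := hb k
    have h2 := hK k
    simp only [addRightEmbedding_apply, Pi.add_apply]
    rw [abs_le] at h2
    omega
  · rw [mem_Fbox]; intro k
    have h1 := hb k
    have h2 := hK k
    simp only [Pi.add_apply, Pi.sub_apply]
    rw [abs_le] at h2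
    omega

lemma sum_shift_le {d : ℕ} (a : (Fin d → ℤ) → ℝ) (C : ℝ) (ha : ∀ i, |a i| ≤ C)
    (i : Fin d → ℤ) (K : ℕ) (hK : ∀ k, |i k| ≤ K) (n : ℕ) (hn : K ≤ n) :
    |∑ j ∈ Fbox d n, (a (j + i) - a j)| ≤ 2 * C * ((n : ℝ) ^ d - ((n : ℝ) - K) ^ d) := by
  set F := Fbox d n
  set G := F.map (addRightEmbedding i)
  have hC : 0 ≤ C := (abs_nonneg _).trans (ha 0)
  have e : ∑ j ∈ F, (a (j + i) - a j) = ∑ j ∈ G \ F, a j - ∑ j ∈ F \ G, a j := by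
    rw [Finset.sum_sub_distrib, Finset.sum_sdiff_sub_sum_sdiff]
    simp [G, Finset.sum_map]
  have hb : ∀ s : Finset (Fin d → ℤ), |∑ j ∈ s, a j| ≤ s.card * C := by
    intro s
    refine (Finset.abs_sum_le_sum_abs _ _).trans ?_
    refine (Finset.sum_le_sum fun j _ => ha j).trans ?_
    simp
  have hG : G.card = F.card := Finset.card_map _
  have hF : F.card = n ^ d := card_Fbox d n
  have hI := card_inter_ge i K hK n hn
  have hI' : ((n : ℝ) - K) ^ d ≤ ((F ∩ G).card : ℝ) := by
    have : (((n - K) ^ d : ℕ) : ℝ) ≤ ((F ∩ G).card : ℝ) := by exact_mod_cast hI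
    rwa [Nat.cast_pow, Nat.cast_sub hn] at this
  have c1 : ((F \ G).card : ℝ) ≤ (n : ℝ) ^ d - ((n : ℝ) - K) ^ d := by
    have := Finset.card_sdiff_add_card_inter F G
    have h2 : ((F \ G).card : ℝ) + ((F ∩ G).card : ℝ) = (n : ℝ) ^ d := by
      rw [← Nat.cast_pow, ← hF]; exact_mod_cast this
    linarith
  have c2 : ((G \ F).card : ℝ) ≤ (n : ℝ) ^ d - ((n : ℝ) - K) ^ d := by
    have := Finset.card_sdiff_add_card_inter G F
    rw [Finset.inter_comm] at this
    have h2 : ((G \ F).card : ℝ) + ((F ∩ G).card : ℝ) = (n : ℝ) ^ d := by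
      rw [← Nat.cast_pow, ← hF, ← hG]; exact_mod_cast this
    linarith
  rw [e]
  have h3 := hb (G \ F)
  have h4 := hb (F \ G)
  have h5 := abs_sub (∑ j ∈ G \ F, a j) (∑ j ∈ F \ G, a j)
  nlinarith

lemma goodE_cob_bdd {d : ℕ} [MeasurableSpace X] (T : (Fin d → ℤ) → X → X)
    (hTadd : ∀ i j, T (i + j) = T i ∘ T j)
    (μ : Measure X) [IsProbabilityMeasure μ] (hT : ∀ j, MeasurePreserving (T j) μ μ)
    (w : X → ℝ) (hw : Measurable w) (C : ℝ) (hC : ∀ x, |w x| ≤ C) (i : Fin d → ℤ) :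
    GoodE T μ (fun x => w (T i x) - w x) := by
  have hwi : Integrable w μ := Integrable.of_bound hw.aestronglyMeasurable C (ae_of_all _ hC)
  have e0 : ∫ x, (w (T i x) - w x) ∂μ = 0 := by
    have h1 := integral_sub ((hT i).integrable_comp_of_integrable hwi) hwi
    simp only [Function.comp_apply] at h1
    rw [h1]
    have h2 := integral_map (hT i).measurable.aemeasurable (μ := μ) hw.aestronglyMeasurable
    rw [← h2, (hT i).map_eq, sub_self]
  unfold GoodE
  rw [e0]
  refine ae_of_all _ fun x => ?_
  obtain ⟨K, hK⟩ : ∃ K : ℕ, ∀ k, |i k| ≤ K := by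
    refine ⟨∑ k, (i k).natAbs, fun k => ?_⟩
    have := Finset.single_le_sum (f := fun k => (i k).natAbs) (fun _ _ => Nat.zero_le _) (Finset.mem_univ k)
    rw [Int.abs_eq_natAbs]
    exact_mod_cast this
  have lim : Tendsto (fun n : ℕ => 2 * C * (1 - (1 - (K : ℝ) / n) ^ d)) atTop
      (nhds (2 * C * (1 - (1 - 0) ^ d))) :=
    (tendsto_const_nhds.sub ((tendsto_const_nhds.sub
      (tendsto_const_div_atTop_nhds_zero_nat (K : ℝ))).pow d)).const_mul _
  rw [show 2 * C * (1 - (1 - 0 : ℝ) ^ d) = 0 by simp] at lim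
  refine squeeze_zero_norm' ?_ lim
  filter_upwards [eventually_gt_atTop 0, eventually_ge_atTop K] with n hn hnK
  have hn' : (0 : ℝ) < n := by exact_mod_cast hn
  have := sum_shift_le (fun j => w (T j x)) C (fun j => hC _) i K hK n hnK
  have e : ∀ j, T i (T j x) = T (j + i) x := fun j => by rw [add_comm, hTadd]; rfl
  simp only [av, card_Fbox, Real.norm_eq_abs, e]
  rw [abs_div, Nat.cast_pow, abs_of_pos (show (0 : ℝ) < (n : ℝ) ^ d by positivity),
    div_le_iff₀ (by positivity)]
  refine this.trans (le_of_eq ?_)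
  have : ((n : ℝ) - K) ^ d = (1 - (K : ℝ) / n) ^ d * (n : ℝ) ^ d := by
    rw [← mul_pow]; congr 1; field_simp
  rw [this]; ring

lemma goodE_cob {d : ℕ} [MetricSpace X] [MeasurableSpace X] [BorelSpace X] (T : (Fin d → ℤ) → X → X)
    (hTadd : ∀ i j, T (i + j) = T i ∘ T j)
    (μ : Measure X) [IsProbabilityMeasure μ] (hT : ∀ j, MeasurePreserving (T j) μ μ)
    (w : X → ℝ) (hw : Measurable w) (hwi : Integrable w μ) (i : Fin d → ℤ) :
    GoodE T μ (fun x => w (T i x) - w x) := by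
  refine goodE_of_approx T hTadd μ hT _ ((hw.comp (hT i).measurable).sub hw)
    (((hT i).integrable_comp_of_integrable hwi).sub hwi) fun ε hε => ?_
  obtain ⟨g, hg, hgi⟩ := hwi.exists_boundedContinuous_integral_sub_le (half_pos hε)
  have hgm : Measurable g := g.continuous.measurable
  have hgi' := (hT i).integrable_comp_of_integrable hgi
  have hwi' := (hT i).integrable_comp_of_integrable hwi
  refine ⟨fun x => g (T i x) - g x, (hgm.comp (hT i).measurable).sub hgm,
    hgi'.sub hgi, goodE_cob_bdd T hTadd μ hT g hgm ‖g‖ (fun x => g.norm_coe_le_norm x) i, ?_⟩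
  have e : ∫ x, |w (T i x) - g (T i x)| ∂μ = ∫ x, |w x - g x| ∂μ := by
    have h2 := integral_map (hT i).measurable.aemeasurable (μ := μ) (f := fun x => |w x - g x|)
      (hw.sub hgm).abs.aestronglyMeasurable
    rw [← h2, (hT i).map_eq]
  simp only [Real.norm_eq_abs] at hg
  calc ∫ x, |w (T i x) - w x - (g (T i x) - g x)| ∂μ
      ≤ ∫ x, (|w (T i x) - g (T i x)| + |w x - g x|) ∂μ := by
        refine integral_mono ((hwi'.sub hwi).sub (hgi'.sub hgi)).abs
          ((hwi'.sub hgi').abs.add (hwi.sub hgi).abs) fun x => ?_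
        simp only
        rw [show w (T i x) - w x - (g (T i x) - g x) = (w (T i x) - g (T i x)) - (w x - g x) by ring]
        exact abs_sub _ _
    _ = ∫ x, |w (T i x) - g (T i x)| ∂μ + ∫ x, |w x - g x| ∂μ :=
        integral_add (hwi'.sub hgi').abs (hwi.sub hgi).abs
    _ ≤ ε := by rw [e]; linarith

lemma zero_one_of_ae {d : ℕ} [MeasurableSpace X] (T : (Fin d → ℤ) → X → X)
    (hTadd : ∀ i j, T (i + j) = T i ∘ T j)
    (μ : Measure X) [IsProbabilityMeasure μ] (hT : ∀ j, MeasurePreserving (T j) μ μ)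
    (herg : ∀ A : Set X, MeasurableSet A → (∀ j, T j ⁻¹' A = A) → μ A = 0 ∨ μ A = 1)
    (A : Set X) (hA : MeasurableSet A) (hinv : ∀ j, T j ⁻¹' A =ᵐ[μ] A) : μ A = 0 ∨ μ A = 1 := by
  have h1 : (⋂ j, T j ⁻¹' A) =ᵐ[μ] A := by
    have : (⋂ j, T j ⁻¹' A) =ᵐ[μ] ⋂ _ : Fin d → ℤ, A := Filter.EventuallyEq.countable_iInter hinv
    rwa [Set.iInter_const] at this
  rw [← measure_congr h1]
  refine herg _ (MeasurableSet.iInter fun j => (hT j).measurable hA) fun j => ?_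
  ext x
  simp only [Set.mem_preimage, Set.mem_iInter]
  constructor
  · intro h i
    have := h (i - j)
    rwa [← Function.comp_apply (f := T (i - j)), ← hTadd, sub_add_cancel] at this
  · intro h i
    have := h (i + j)
    rwa [hTadd] at this

lemma goodE_L2 {d : ℕ} [MetricSpace X] [MeasurableSpace X] [BorelSpace X] (T : (Fin d → ℤ) → X → X)
    (hTadd : ∀ i j, T (i + j) = T i ∘ T j)
    (μ : Measure X) [IsProbabilityMeasure μ] (hT : ∀ j, MeasurePreserving (T j) μ μ)
    (herg : ∀ A : Set X, MeasurableSet A → (∀ j, T j ⁻¹' A = A) → μ A = 0 ∨ μ A = 1)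
    (w : X → ℝ) (hw : Measurable w) (hw2 : MemLp w 2 μ) : GoodE T μ w := by
  have hIntg : ∀ v : Lp ℝ 2 μ, Integrable v μ := fun v => (Lp.memLp v).integrable (by norm_num)
  let K : Submodule ℝ (Lp ℝ 2 μ) :=
    { carrier := {v | GoodE T μ v}
      add_mem' := by
        intro a b ha hb
        exact GoodE.congr hT (Lp.coeFn_add a b).symm (GoodE.add ha hb (hIntg a) (hIntg b))
      zero_mem' := GoodE.congr hT (Lp.coeFn_zero ℝ 2 μ).symm (goodE_const T μ 0)
      smul_mem' := by
        intro c a ha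
        exact GoodE.congr hT (Lp.coeFn_smul c a).symm (GoodE.const_mul c ha) }
  have hKmem : ∀ v : Lp ℝ 2 μ, v ∈ K ↔ GoodE T μ v := fun v => Iff.rfl
  have hK : Kᗮ = ⊥ := by
    rw [Submodule.eq_bot_iff]
    intro g hg
    have hgm : Measurable (g : X → ℝ) := (Lp.stronglyMeasurable g).measurable
    have hinv : ∀ i, (g : X → ℝ) ∘ T i =ᵐ[μ] g := by
      intro i
      let Ug := Lp.compMeasurePreserving (T i) (hT i) g
      have hU : (Ug : X → ℝ) =ᵐ[μ] g ∘ T i := Lp.coeFn_compMeasurePreserving g (hT i)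
      have hmem : Ug - g ∈ K := by
        rw [hKmem]
        refine GoodE.congr hT ?_ (goodE_cob T hTadd μ hT g hgm (hIntg g) i)
        filter_upwards [Lp.coeFn_sub Ug g, hU] with x h1 h2
        rw [h1, Pi.sub_apply, h2]; rfl
      have h0 := Submodule.inner_right_of_mem_orthogonal hmem hg
      have hn : ‖Ug‖ = ‖g‖ := Lp.norm_compMeasurePreserving g (hT i)
      have h1 : ‖Ug - g‖ ^ 2 = 0 := by
        rw [inner_sub_left, real_inner_self_eq_norm_sq] at h0
        rw [norm_sub_sq_real, hn]; linarith
      have h2 : Ug = g := by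
        rw [← sub_eq_zero, ← norm_eq_zero]; simpa using h1
      rw [h2] at hU
      exact hU.symm
    obtain ⟨c, hc⟩ := exists_eventuallyEq_const_of_forall_separating (l := ae μ)
      (f := (g : X → ℝ)) MeasurableSet (fun U hU => by
        have := zero_one_of_ae T hTadd μ hT herg (g ⁻¹' U) (hgm hU) (fun j => by
          refine ((hinv j).mono fun x hx => ?_).set_eq
          rw [Set.mem_preimage, Set.mem_preimage, Set.mem_preimage, ← hx]; rfl)
        rcases this with h | h
        · right; exact measure_eq_zero_iff_ae_notMem.1 h
        · left; exact (mem_ae_iff_prob_eq_one (hgm hU)).2 h)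
    have hgK : g ∈ K := (hKmem g).2 (GoodE.congr hT hc.symm (goodE_const T μ c))
    have := Submodule.inner_right_of_mem_orthogonal hgK hg
    exact inner_self_eq_zero.1 this
  have hdense : K.topologicalClosure = ⊤ := (Submodule.topologicalClosure_eq_top_iff).2 hK
  refine goodE_of_approx T hTadd μ hT w hw (hw2.integrable (by norm_num)) fun ε hε => ?_
  have hmem : hw2.toLp w ∈ closure (K : Set (Lp ℝ 2 μ)) := by
    rw [← Submodule.topologicalClosure_coe, hdense]; trivial
  obtain ⟨v, hvK, hv⟩ := Metric.mem_closure_iff.1 hmem ε hε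
  refine ⟨v, (Lp.stronglyMeasurable v).measurable, hIntg v, hvK, ?_⟩
  rw [dist_eq_norm, Lp.norm_def] at hv
  have e1 : eLpNorm (↑↑(hw2.toLp w - v)) 2 μ = eLpNorm (fun x => w x - v x) 2 μ := by
    refine eLpNorm_congr_ae ?_
    filter_upwards [Lp.coeFn_sub (hw2.toLp w) v, hw2.coeFn_toLp] with x h1 h2
    rw [h1, Pi.sub_apply, h2]
  rw [e1] at hv
  have hmd : MemLp (fun x => w x - v x) 2 μ := hw2.sub (Lp.memLp v)
  have h3 : eLpNorm (fun x => w x - v x) 1 μ ≤ eLpNorm (fun x => w x - v x) 2 μ :=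
    eLpNorm_le_eLpNorm_of_exponent_le (by norm_num) hmd.1
  have h4 : ∫ x, |w x - v x| ∂μ = (eLpNorm (fun x => w x - v x) 1 μ).toReal := by
    rw [eLpNorm_one_eq_lintegral_enorm, ← integral_norm_eq_lintegral_enorm hmd.1]
    simp
  rw [h4]
  exact (ENNReal.toReal_mono hmd.2.ne h3).trans hv.le

theorem goodE_L1 {d : ℕ} [MetricSpace X] [MeasurableSpace X] [BorelSpace X] (T : (Fin d → ℤ) → X → X)
    (hTadd : ∀ i j, T (i + j) = T i ∘ T j)
    (μ : Measure X) [IsProbabilityMeasure μ] (hT : ∀ j, MeasurePreserving (T j) μ μ)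
    (herg : ∀ A : Set X, MeasurableSet A → (∀ j, T j ⁻¹' A = A) → μ A = 0 ∨ μ A = 1)
    (w : X → ℝ) (hw : Measurable w) (hwi : Integrable w μ) : GoodE T μ w := by
  refine goodE_of_approx T hTadd μ hT w hw hwi fun ε hε => ?_
  obtain ⟨g, hg, hgi⟩ := hwi.exists_boundedContinuous_integral_sub_le hε
  have hgm : Measurable g := g.continuous.measurable
  refine ⟨g, hgm, hgi, goodE_L2 T hTadd μ hT herg g hgm ?_, by simpa using hg⟩
  exact MemLp.of_bound hgm.aestronglyMeasurable ‖g‖ (ae_of_all _ fun x => g.norm_coe_le_norm x)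


/-- The finite-stage quantities of `dF`. -/
def qn {d : ℕ} (T : (Fin d → ℤ) → X → X) (f : X → ℂ) (n : ℕ) (x y : X) : ℝ :=
  Real.sqrt ((∑ j ∈ Fbox d n, ‖f (T j x) - f (T j y)‖ ^ 2) / ((Fbox d n).card : ℝ))

/-- Points with bounded averages of `|f|²`. -/
def Bp {d : ℕ} (T : (Fin d → ℤ) → X → X) (f : X → ℂ) (x : X) : Prop :=
  BddAbove (Set.range fun n : ℕ => av T (fun x => ‖f x‖ ^ 2) n x)

lemma qn_nonneg {d : ℕ} (T : (Fin d → ℤ) → X → X) (f : X → ℂ) (n : ℕ) (x y : X) :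
    0 ≤ qn T f n x y := Real.sqrt_nonneg _

lemma qn_sq {d : ℕ} (T : (Fin d → ℤ) → X → X) (f : X → ℂ) (n : ℕ) (x y : X) :
    qn T f n x y ^ 2 = (∑ j ∈ Fbox d n, ‖f (T j x) - f (T j y)‖ ^ 2) / ((Fbox d n).card : ℝ) :=
  Real.sq_sqrt (by positivity)

lemma qn_comm {d : ℕ} (T : (Fin d → ℤ) → X → X) (f : X → ℂ) (n : ℕ) (x y : X) :
    qn T f n x y = qn T f n y x := by
  unfold qn
  simp_rw [norm_sub_rev]

lemma qn_triangle {d : ℕ} (T : (Fin d → ℤ) → X → X) (f : X → ℂ) (n : ℕ) (x y z : X) :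
    qn T f n x z ≤ qn T f n x y + qn T f n y z := by
  let v : X → EuclideanSpace ℂ (Fbox d n) := fun x => WithLp.toLp 2 (fun j => f (T j x))
  have h : ∀ x y, qn T f n x y = ‖v x - v y‖ / Real.sqrt ((Fbox d n).card : ℝ) := by
    intro x y
    rw [EuclideanSpace.norm_eq, qn, Real.sqrt_div (by positivity)]
    congr 2
    rw [← Finset.sum_coe_sort]
    rfl
  rw [h, h, h, ← add_div]
  gcongr
  exact norm_sub_le_norm_sub_add_norm_sub _ _ _

lemma sq_norm_sub_le (a b : ℂ) : ‖a - b‖ ^ 2 ≤ 2 * ‖a‖ ^ 2 + 2 * ‖b‖ ^ 2 := by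
  have := norm_sub_le a b
  nlinarith [norm_nonneg (a - b), sq_nonneg (‖a‖ - ‖b‖), norm_nonneg a, norm_nonneg b]

lemma qn_bdd {d : ℕ} {T : (Fin d → ℤ) → X → X} {f : X → ℂ} {x y : X} (hx : Bp T f x)
    (hy : Bp T f y) : IsBoundedUnder (· ≤ ·) atTop (fun n => qn T f n x y) := by
  obtain ⟨a, ha⟩ := hx
  obtain ⟨b, hb⟩ := hy
  refine isBoundedUnder_of ⟨Real.sqrt (2 * a + 2 * b), fun n => Real.sqrt_le_sqrt ?_⟩
  have h1 : av T (fun x => ‖f x‖ ^ 2) n x ≤ a := ha ⟨n, rfl⟩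
  have h2 : av T (fun x => ‖f x‖ ^ 2) n y ≤ b := hb ⟨n, rfl⟩
  calc (∑ j ∈ Fbox d n, ‖f (T j x) - f (T j y)‖ ^ 2) / ((Fbox d n).card : ℝ)
      ≤ (∑ j ∈ Fbox d n, (2 * ‖f (T j x)‖ ^ 2 + 2 * ‖f (T j y)‖ ^ 2)) / ((Fbox d n).card : ℝ) := by
        gcongr; exact sq_norm_sub_le _ _
    _ = 2 * av T (fun x => ‖f x‖ ^ 2) n x + 2 * av T (fun x => ‖f x‖ ^ 2) n y := by
        rw [Finset.sum_add_distrib, ← Finset.mul_sum, ← Finset.mul_sum]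
        unfold av; ring
    _ ≤ _ := by linarith

lemma dF_le_of_ev {d : ℕ} {T : (Fin d → ℤ) → X → X} {f : X → ℂ} {x y : X} {a : ℝ}
    (h : ∀ᶠ n in atTop, qn T f n x y ≤ a) : dF T f x y ≤ a := by
  change limsup (fun n => qn T f n x y) atTop ≤ a
  exact limsup_le_of_le (isCoboundedUnder_le_of_le atTop (fun n => qn_nonneg T f n x y)) h

lemma ev_of_dF_lt {d : ℕ} {T : (Fin d → ℤ) → X → X} {f : X → ℂ} {x y : X} {a : ℝ}
    (hx : Bp T f x) (hy : Bp T f y) (h : dF T f x y < a) : ∀ᶠ n in atTop, qn T f n x y < a :=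
  eventually_lt_of_limsup_lt h (qn_bdd hx hy)

lemma dF_self_le {d : ℕ} (T : (Fin d → ℤ) → X → X) (f : X → ℂ) (x : X) : dF T f x x ≤ 0 :=
  dF_le_of_ev (Eventually.of_forall fun n => by simp [qn])

lemma dF_comm {d : ℕ} (T : (Fin d → ℤ) → X → X) (f : X → ℂ) (x y : X) :
    dF T f x y = dF T f y x := by
  change limsup (fun n => qn T f n x y) atTop = limsup (fun n => qn T f n y x) atTop
  simp_rw [qn_comm T f _ x y]

lemma dF_nonneg {d : ℕ} {T : (Fin d → ℤ) → X → X} {f : X → ℂ} {x y : X}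
    (hx : Bp T f x) (hy : Bp T f y) : 0 ≤ dF T f x y := by
  by_contra h
  obtain ⟨n, hn⟩ := (ev_of_dF_lt hx hy (not_le.1 h)).exists
  exact absurd hn (not_lt.2 (qn_nonneg T f n x y))

lemma dF_triangle {d : ℕ} {T : (Fin d → ℤ) → X → X} {f : X → ℂ} {x y z : X}
    (hx : Bp T f x) (hy : Bp T f y) (hz : Bp T f z) :
    dF T f x z ≤ dF T f x y + dF T f y z := by
  refine le_of_forall_pos_le_add fun ε hε => dF_le_of_ev ?_
  filter_upwards [ev_of_dF_lt hx hy (lt_add_of_pos_right _ (half_pos hε)),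
    ev_of_dF_lt hy hz (lt_add_of_pos_right _ (half_pos hε))] with n h1 h2
  have := qn_triangle T f n x y z
  linarith

lemma dF_shift {d : ℕ} {T : (Fin d → ℤ) → X → X} (hTadd : ∀ i j, T (i + j) = T i ∘ T j)
    {f : X → ℂ} {x y : X} (hx : Bp T f x) (hy : Bp T f y) (i : Fin d → ℤ) (hi : 0 ≤ i) :
    dF T f (T i x) (T i y) ≤ dF T f x y := by
  obtain ⟨K, hK⟩ : ∃ K : ℕ, ∀ k, i k ≤ K := by
    refine ⟨∑ k, (i k).natAbs, fun k => ?_⟩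
    have := Finset.single_le_sum (f := fun k => (i k).natAbs) (fun _ _ => Nat.zero_le _) (Finset.mem_univ k)
    refine (le_abs_self _).trans ?_
    rw [Int.abs_eq_natAbs]
    exact_mod_cast this
  refine le_of_forall_pos_le_add fun ε hε => dF_le_of_ev ?_
  set D := dF T f x y with hD
  have hD0 : 0 ≤ D := dF_nonneg hx hy
  have lim : Tendsto (fun n : ℕ => (D + ε / 2) ^ 2 * (1 + (K : ℝ) / n) ^ d) atTop
      (nhds ((D + ε / 2) ^ 2 * (1 + 0) ^ d)) :=
    ((tendsto_const_nhds.add (tendsto_const_div_atTop_nhds_zero_nat (K : ℝ))).pow d).const_mul _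
  have hlt : (D + ε / 2) ^ 2 * (1 + 0 : ℝ) ^ d < (D + ε) ^ 2 := by
    simp only [add_zero, one_pow, mul_one]; gcongr; linarith
  have h1 := ev_of_dF_lt hx hy (lt_add_of_pos_right _ (half_pos hε))
  have h2 := (tendsto_add_atTop_nat K).eventually h1
  filter_upwards [lim.eventually_lt_const hlt, h2, eventually_gt_atTop 0] with n h3 h4 hn
  have hn' : (0 : ℝ) < n := by exact_mod_cast hn
  refine le_of_sq_le_sq ?_ (by positivity) 
  refine le_trans ?_ h3.le
  have h5 : qn T f (n + K) x y ^ 2 ≤ (D + ε / 2) ^ 2 := by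
    have := qn_nonneg T f (n + K) x y
    gcongr
  rw [qn_sq, card_Fbox, div_le_iff₀ (by positivity)] at h5
  rw [qn_sq, card_Fbox, div_le_iff₀ (by positivity)]
  have h6 : ∑ j ∈ Fbox d n, ‖f (T j (T i x)) - f (T j (T i y))‖ ^ 2 ≤
      ∑ j ∈ Fbox d (n + K), ‖f (T j x) - f (T j y)‖ ^ 2 := by
    have e : ∑ j ∈ Fbox d n, ‖f (T j (T i x)) - f (T j (T i y))‖ ^ 2 =
        ∑ j ∈ (Fbox d n).map (addRightEmbedding i), ‖f (T j x) - f (T j y)‖ ^ 2 := by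
      simp [Finset.sum_map, hTadd]
    rw [e]
    refine Finset.sum_le_sum_of_subset_of_nonneg ?_ (fun _ _ _ => by positivity)
    intro j hj
    obtain ⟨b, hb, rfl⟩ := Finset.mem_map.1 hj
    rw [mem_Fbox] at *
    intro k
    have h1 := hb k
    have h2 := hK k
    have h3 := hi k
    simp only [addRightEmbedding_apply, Pi.add_apply, Pi.zero_apply] at *
    push_cast; omega
  refine h6.trans (h5.trans (le_of_eq ?_))
  have : ((n : ℝ) + K) ^ d = (1 + (K : ℝ) / n) ^ d * (n : ℝ) ^ d := by
    rw [← mul_pow]; congr 1; field_simp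
  push_cast
  rw [this]; ring

/-- The finite-stage densities. -/
def dn (d : ℕ) (S : Set (Fin d → ℤ)) (n : ℕ) : ℝ :=
  (((Fbox d n).filter (fun j => j ∈ S)).card : ℝ) / ((Fbox d n).card : ℝ)

lemma dn_nonneg (d : ℕ) (S : Set (Fin d → ℤ)) (n : ℕ) : 0 ≤ dn d S n := by
  unfold dn; positivity

lemma dn_le_one (d : ℕ) (S : Set (Fin d → ℤ)) (n : ℕ) : dn d S n ≤ 1 := by
  unfold dn
  refine div_le_one_of_le₀ ?_ (by positivity)
  exact_mod_cast Finset.card_filter_le _ _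

lemma ud_le_of_ev {d : ℕ} {S : Set (Fin d → ℤ)} {a : ℝ} (h : ∀ᶠ n in atTop, dn d S n ≤ a) :
    upperDensity d S ≤ a := by
  change limsup (fun n => dn d S n) atTop ≤ a
  exact limsup_le_of_le (isCoboundedUnder_le_of_le atTop (fun n => dn_nonneg d S n)) h

lemma ev_of_ud_lt {d : ℕ} {S : Set (Fin d → ℤ)} {a : ℝ} (h : upperDensity d S < a) :
    ∀ᶠ n in atTop, dn d S n < a :=
  eventually_lt_of_limsup_lt h (isBoundedUnder_of ⟨1, fun n => dn_le_one d S n⟩)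

lemma rhoF_le_of_dF {d : ℕ} {T : (Fin d → ℤ) → X → X} {f : X → ℂ} {x y : X}
    (hx : Bp T f x) (hy : Bp T f y) {a ε : ℝ} (hε : 0 < ε) (h : dF T f x y < a)
    (haε : a ^ 2 < ε ^ 3) : rhoF T f x y ≤ ε := by
  refine csInf_le ⟨0, fun e he => he.1.le⟩ ⟨hε, ?_⟩
  have : a ^ 2 / ε ^ 2 < ε := by
    rw [div_lt_iff₀ (by positivity)]; linarith [show ε * ε ^ 2 = ε ^ 3 by ring]
  refine lt_of_le_of_lt (ud_le_of_ev ?_) this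
  filter_upwards [ev_of_dF_lt hx hy h, eventually_gt_atTop 0] with n h1 hn
  have h2 : qn T f n x y ^ 2 ≤ a ^ 2 := by
    have := qn_nonneg T f n x y
    gcongr
  rw [qn_sq] at h2
  have hn' : (0 : ℝ) < n := by exact_mod_cast hn
  have hc : (0 : ℝ) < ((Fbox d n).card : ℝ) := by rw [card_Fbox]; positivity
  rw [div_le_iff₀ hc] at h2
  unfold dn
  rw [div_le_div_iff₀ hc (by positivity)]
  refine le_trans ?_ h2
  calc (((Fbox d n).filter (fun j => j ∈ {i | ε < ‖f (T i x) - f (T i y)‖})).card : ℝ) * ε ^ 2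
      = ∑ j ∈ (Fbox d n).filter (fun j => j ∈ {i | ε < ‖f (T i x) - f (T i y)‖}), ε ^ 2 := by simp
    _ ≤ ∑ j ∈ (Fbox d n).filter (fun j => j ∈ {i | ε < ‖f (T i x) - f (T i y)‖}),
          ‖f (T j x) - f (T j y)‖ ^ 2 := by
        refine Finset.sum_le_sum fun j hj => ?_
        have : ε < ‖f (T j x) - f (T j y)‖ := (Finset.mem_filter.1 hj).2
        gcongr
    _ ≤ _ := Finset.sum_le_sum_of_subset_of_nonneg (Finset.filter_subset _ _)
          (fun _ _ _ => by positivity)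

/-- The tail of `|f|²` above level `K`. -/
def tail (f : X → ℂ) (K : ℕ) (x : X) : ℝ := if (K : ℝ) < ‖f x‖ then ‖f x‖ ^ 2 else 0

lemma sq_le_tail (f : X → ℂ) (K : ℕ) (x : X) : ‖f x‖ ^ 2 ≤ (K : ℝ) ^ 2 + tail f K x := by
  unfold tail
  split_ifs with h
  · nlinarith
  · rw [add_zero]; have := not_lt.1 h; gcongr

lemma dF_le_of_rhoF {d : ℕ} [MeasurableSpace X] {T : (Fin d → ℤ) → X → X} {μ : Measure X}
    {f : X → ℂ} {ε : ℝ} (hε : 0 < ε) (K : ℕ) (hK : ∫ x, tail f K x ∂μ < ε ^ 2 / 16) :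
    ∃ η : ℝ, 0 < η ∧ ∀ x y,
      Tendsto (fun n => av T (tail f K) n x) atTop (nhds (∫ x, tail f K x ∂μ)) →
      Tendsto (fun n => av T (tail f K) n y) atTop (nhds (∫ x, tail f K x ∂μ)) →
      rhoF T f x y ≤ η → dF T f x y ≤ ε := by
  obtain ⟨η, hη, hη2⟩ : ∃ η : ℝ, 0 < η ∧ (2 * η) ^ 2 + 4 * (K : ℝ) ^ 2 * (2 * η) ≤ ε ^ 2 / 2 := by
    have lim : Tendsto (fun η : ℝ => (2 * η) ^ 2 + 4 * (K : ℝ) ^ 2 * (2 * η)) (nhdsWithin 0 (Set.Ioi 0))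
        (nhds ((2 * 0) ^ 2 + 4 * (K : ℝ) ^ 2 * (2 * 0))) :=
      Tendsto.mono_left (Continuous.tendsto (by fun_prop) 0) nhdsWithin_le_nhds
    have h := lim.eventually_le_const (u := ε ^ 2 / 2) (by simp; positivity)
    obtain ⟨η, h1, h2⟩ := (h.and self_mem_nhdsWithin).exists
    exact ⟨η, h2, h1⟩
  refine ⟨η, hη, fun x y hx hy hr => ?_⟩
  have hne : {ε : ℝ | 0 < ε ∧ upperDensity d {i | ε < ‖f (T i x) - f (T i y)‖} < ε}.Nonempty :=
    ⟨2, by norm_num, lt_of_le_of_lt (ud_le_of_ev (Eventually.of_forall fun n => dn_le_one _ _ n))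
      (by norm_num)⟩
  obtain ⟨e, ⟨he0, he⟩, he2⟩ := exists_lt_of_csInf_lt hne (lt_of_le_of_lt hr (by linarith : η < 2 * η))
  refine dF_le_of_ev ?_
  filter_upwards [ev_of_ud_lt he, hx.eventually_lt_const hK, hy.eventually_lt_const hK,
    eventually_gt_atTop 0] with n h1 h2 h3 hn
  refine le_of_sq_le_sq ?_ hε.le
  have hn' : (0 : ℝ) < n := by exact_mod_cast hn
  have hc : (0 : ℝ) < ((Fbox d n).card : ℝ) := by rw [card_Fbox]; positivity
  rw [qn_sq]
  have pt : ∀ j, ‖f (T j x) - f (T j y)‖ ^ 2 ≤ e ^ 2 +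
      (4 * (K : ℝ) ^ 2 * (if j ∈ {i | e < ‖f (T i x) - f (T i y)‖} then 1 else 0)
      + (2 * tail f K (T j x) + 2 * tail f K (T j y))) := by
    intro j
    have t1 : 0 ≤ tail f K (T j x) := by unfold tail; split_ifs <;> positivity
    have t2 : 0 ≤ tail f K (T j y) := by unfold tail; split_ifs <;> positivity
    split_ifs with h
    · have := sq_norm_sub_le (f (T j x)) (f (T j y))
      have := sq_le_tail f K (T j x)
      have := sq_le_tail f K (T j y)
      nlinarith [sq_nonneg e]
    · have h' : ‖f (T j x) - f (T j y)‖ ≤ e := not_lt.1 h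
      have : ‖f (T j x) - f (T j y)‖ ^ 2 ≤ e ^ 2 := by gcongr
      linarith
  calc (∑ j ∈ Fbox d n, ‖f (T j x) - f (T j y)‖ ^ 2) / ((Fbox d n).card : ℝ)
      ≤ (∑ j ∈ Fbox d n, (e ^ 2 +
      (4 * (K : ℝ) ^ 2 * (if j ∈ {i | e < ‖f (T i x) - f (T i y)‖} then 1 else 0)
      + (2 * tail f K (T j x) + 2 * tail f K (T j y))))) / ((Fbox d n).card : ℝ) := by
        gcongr with j _; exact pt j
    _ = e ^ 2 + 4 * (K : ℝ) ^ 2 * dn d {i | e < ‖f (T i x) - f (T i y)‖} n +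
        2 * av T (tail f K) n x + 2 * av T (tail f K) n y := by
        unfold dn av
        rw [Finset.sum_add_distrib, Finset.sum_add_distrib, Finset.sum_add_distrib,
          ← Finset.mul_sum, ← Finset.mul_sum, ← Finset.mul_sum, Finset.sum_boole, Finset.sum_const,
          nsmul_eq_mul]
        field_simp
        ring
    _ ≤ (2 * η) ^ 2 + 4 * (K : ℝ) ^ 2 * (2 * η) + 2 * (ε ^ 2 / 16) + 2 * (ε ^ 2 / 16) := by
        have := h1.le.trans he2.le
        have : e ^ 2 ≤ (2 * η) ^ 2 := by gcongr
        gcongr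
    _ ≤ ε ^ 2 := by nlinarith

lemma tail_tendsto [MeasurableSpace X] (μ : Measure X) (f : X → ℂ) (hfm : Measurable f)
    (hf : MemLp f 2 μ) : Tendsto (fun K : ℕ => ∫ x, tail f K x ∂μ) atTop (nhds 0) := by
  have hi : Integrable (fun x => ‖f x‖ ^ 2) μ := hf.integrable_norm_pow (by norm_num)
  have := tendsto_integral_of_dominated_convergence (μ := μ) (F := fun K : ℕ => tail f K)
    (f := fun _ => (0 : ℝ)) (fun x => ‖f x‖ ^ 2)
    (fun K => (Measurable.ite (measurableSet_lt measurable_const hfm.norm) (hfm.norm.pow_const 2)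
      measurable_const).aestronglyMeasurable) hi
    (fun K => ae_of_all _ fun x => by
      unfold tail; split_ifs <;> simp)
    (ae_of_all _ fun x => by
      refine tendsto_const_nhds.congr' ?_
      obtain ⟨m, hm⟩ := exists_nat_ge ‖f x‖
      filter_upwards [eventually_ge_atTop m] with K hK
      have : (m : ℝ) ≤ K := by exact_mod_cast hK
      rw [tail, if_neg (by linarith)])
  simpa using this

lemma tail_meas [MeasurableSpace X] (f : X → ℂ) (hfm : Measurable f) (K : ℕ) :
    Measurable (tail f K) :=
  Measurable.ite (measurableSet_lt measurable_const hfm.norm) (hfm.norm.pow_const 2)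
      measurable_const

lemma tail_int [MeasurableSpace X] (μ : Measure X) (f : X → ℂ) (hfm : Measurable f)
    (hf : MemLp f 2 μ) (K : ℕ) : Integrable (tail f K) μ := by
  have hi : Integrable (fun x => ‖f x‖ ^ 2) μ := hf.integrable_norm_pow (by norm_num)
  refine hi.mono' (tail_meas f hfm K).aestronglyMeasurable (ae_of_all _ fun x => ?_)
  unfold tail; split_ifs <;> simp

lemma dF_meas {d : ℕ} [MeasurableSpace X] (T : (Fin d → ℤ) → X → X) (hT : ∀ j, Measurable (T j))
    (f : X → ℂ) (hfm : Measurable f) : Measurable (fun p : X × X => dF T f p.1 p.2) := by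
  unfold dF
  refine Measurable.limsup fun n => ?_
  refine Real.continuous_sqrt.measurable.comp ?_
  refine Measurable.div_const (Finset.measurable_sum _ fun j _ => ?_) _
  exact (((hfm.comp ((hT j).comp measurable_fst)).sub
    (hfm.comp ((hT j).comp measurable_snd))).norm).pow_const 2


lemma exists_meas_full [MeasurableSpace X] {μ : Measure X} {p : X → Prop} (h : ∀ᵐ x ∂μ, p x) :
    ∃ G : Set X, MeasurableSet G ∧ μ Gᶜ = 0 ∧ ∀ x ∈ G, p x := by
  obtain ⟨t, hsub, hmeas, h0⟩ := exists_measurable_superset_of_null (ae_iff.1 h)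
  refine ⟨tᶜ, hmeas.compl, by simpa using h0, fun x hx => ?_⟩
  by_contra hp
  exact hx (hsub hp)

lemma measure_inter_full [MeasurableSpace X] {μ : Measure X} {A G : Set X} (h : μ Gᶜ = 0) :
    μ (A ∩ G) = μ A :=
  measure_inter_conull h

/-- Lusin-type selection. -/
lemma compact_select [MetricSpace X] [CompactSpace X] [MeasurableSpace X] [BorelSpace X]
    (μ : Measure X) [IsProbabilityMeasure μ] (C : X → Set X) (hC : ∀ x, MeasurableSet (C x))
    (s : Finset X) : ∀ τ : ENNReal, τ ≠ 0 → ∃ M : Set X, IsCompact M ∧ ∃ δ : ℝ, 0 < δ ∧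
      μ ((⋃ c ∈ s, C c) \ M) ≤ τ ∧
      ∀ x ∈ M, ∀ y ∈ M, dist x y ≤ δ → ∃ c ∈ s, x ∈ C c ∧ y ∈ C c := by
  induction s using Finset.induction_on with
  | empty => intro τ _; exact ⟨∅, isCompact_empty, 1, one_pos, by simp, by simp⟩
  | insert a s ha ih =>
    intro τ hτ
    have hτ2 : τ / 2 ≠ 0 := (ENNReal.half_pos hτ).ne'
    obtain ⟨M, hM, δ, hδ, hμ, hM2⟩ := ih (τ / 2) hτ2
    obtain ⟨K, hKs, hK, hKμ⟩ := ((hC a).diff hM.measurableSet).exists_isCompact_sdiff_lt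
      (measure_ne_top μ _) hτ2
    have hdis : Disjoint M K := Set.disjoint_left.2 fun x hx hxK => (hKs hxK).2 hx
    obtain ⟨r, hr, hd⟩ := hdis.exists_thickenings hM hK.isClosed
    have far : ∀ x ∈ M, ∀ y ∈ K, dist x y ≤ min δ (r / 2) → False := by
      intro x hx y hy hxy
      have h1 : dist x y < r := lt_of_le_of_lt (hxy.trans (min_le_right _ _)) (by linarith)
      refine Set.disjoint_left.1 hd (?_ : y ∈ _) (Metric.self_subset_thickening hr K hy)
      exact Metric.mem_thickening_iff.2 ⟨x, hx, by rwa [dist_comm]⟩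
    refine ⟨M ∪ K, hM.union hK, min δ (r / 2), by positivity, ?_, ?_⟩
    · have : (⋃ c ∈ insert a s, C c) \ (M ∪ K) ⊆ ((⋃ c ∈ s, C c) \ M) ∪ ((C a \ M) \ K) := by
        rintro x ⟨hx, hxM⟩
        simp only [Set.mem_union, not_or] at hxM
        rw [Finset.set_biUnion_insert] at hx
        rcases hx with h | h
        · right; exact ⟨⟨h, hxM.1⟩, hxM.2⟩
        · left; exact ⟨h, hxM.1⟩
      calc _ ≤ _ := measure_mono this
        _ ≤ _ := measure_union_le _ _
        _ ≤ τ / 2 + τ / 2 := add_le_add hμ hKμ.le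
        _ = τ := ENNReal.add_halves τ
    · rintro x (hx | hx) y (hy | hy) hxy
      · obtain ⟨c, hc, h⟩ := hM2 x hx y hy (hxy.trans (min_le_left _ _))
        exact ⟨c, Finset.mem_insert_of_mem hc, h⟩
      · exact (far x hx y hy hxy).elim
      · exact (far y hy x hx (by rwa [dist_comm])).elim
      · exact ⟨a, Finset.mem_insert_self _ _, (hKs hx).1, (hKs hy).1⟩

lemma zero_one_of_nonneg {d : ℕ} [MeasurableSpace X] (T : (Fin d → ℤ) → X → X)
    (hTadd : ∀ i j, T (i + j) = T i ∘ T j)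
    (μ : Measure X) [IsProbabilityMeasure μ] (hT : ∀ j, MeasurePreserving (T j) μ μ)
    (herg : ∀ A : Set X, MeasurableSet A → (∀ j, T j ⁻¹' A = A) → μ A = 0 ∨ μ A = 1)
    (A : Set X) (hA : MeasurableSet A) (hinv : ∀ j, 0 ≤ j → A ≤ᵐ[μ] T j ⁻¹' A) :
    μ A = 0 ∨ μ A = 1 := by
  have h1 : ∀ j, 0 ≤ j → T j ⁻¹' A =ᵐ[μ] A := by
    intro j hj
    refine (ae_eq_of_ae_subset_of_measure_ge (hinv j hj) ?_ hA.nullMeasurableSet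
      (measure_ne_top _ _)).symm
    rw [(hT j).measure_preimage hA.nullMeasurableSet]
  refine zero_one_of_ae T hTadd μ hT herg A hA fun j => ?_
  have ha : (0 : Fin d → ℤ) ≤ fun k => max (j k) 0 := fun k => le_max_right _ _
  have hb : (0 : Fin d → ℤ) ≤ fun k => max (- j k) 0 := fun k => le_max_right _ _
  have e : (fun k => max (j k) 0) = (fun k => max (- j k) 0) + j := by
    ext k; simp only [Pi.add_apply]; omega
  have h2 := h1 _ ha
  rw [e, hTadd, Set.preimage_comp] at h2
  have h3 := (hT j).quasiMeasurePreserving.preimage_ae_eq (h1 _ hb)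
  exact h3.symm.trans h2

lemma ae_Bp {d : ℕ} [MetricSpace X] [MeasurableSpace X] [BorelSpace X] (T : (Fin d → ℤ) → X → X)
    (hTadd : ∀ i j, T (i + j) = T i ∘ T j)
    (μ : Measure X) [IsProbabilityMeasure μ] (hT : ∀ j, MeasurePreserving (T j) μ μ)
    (herg : ∀ A : Set X, MeasurableSet A → (∀ j, T j ⁻¹' A = A) → μ A = 0 ∨ μ A = 1)
    (f : X → ℂ) (hfm : Measurable f) (hf : MemLp f 2 μ) :
    ∀ᵐ x ∂μ, Bp T f x ∧ genericSq μ T f x := by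
  have h := goodE_L1 T hTadd μ hT herg (fun x => ‖f x‖ ^ 2) (hfm.norm.pow_const 2)
    (hf.integrable_norm_pow (by norm_num))
  filter_upwards [h] with x hx
  exact ⟨hx.bddAbove_range, hx⟩

lemma dF_ball_meas {d : ℕ} [MeasurableSpace X] (T : (Fin d → ℤ) → X → X)
    (hT : ∀ j, Measurable (T j)) (f : X → ℂ) (hfm : Measurable f) (ε : ℝ) (x : X) :
    MeasurableSet {y | dF T f x y ≤ ε} := by
  have h : Measurable (fun y => dF T f x y) := by
    unfold dF
    refine Measurable.limsup fun n => ?_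
    refine Real.continuous_sqrt.measurable.comp ?_
    refine Measurable.div_const (Finset.measurable_sum _ fun j _ => ?_) _
    exact ((measurable_const.sub (hfm.comp (hT j))).norm).pow_const 2
  exact measurableSet_le h measurable_const

lemma finite_cover {d : ℕ} [MeasurableSpace X] (T : (Fin d → ℤ) → X → X)
    (μ : Measure X) [IsProbabilityMeasure μ] (hT : ∀ j, MeasurePreserving (T j) μ μ)
    (f : X → ℂ) (hfm : Measurable f) (hae : ∀ᵐ x ∂μ, Bp T f x) (ε : ℝ) (hε : 0 ≤ ε) (n : ℕ)
    (Y : Set X) (hY : ∀ x ∈ Y, Bp T f x ∧ (1 : ENNReal) / (n + 1) ≤ μ {y | dF T f x y ≤ ε}) :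
    ∃ s : Finset X, (∀ x ∈ s, x ∈ Y) ∧ ∀ y ∈ Y, ∃ x ∈ s, dF T f x y ≤ 2 * ε := by
  by_contra hcon
  push Not at hcon
  have build : ∀ k : ℕ, ∃ s : Finset X, s.card = k ∧ (∀ x ∈ s, x ∈ Y) ∧
      ∀ x ∈ s, ∀ y ∈ s, x ≠ y → 2 * ε < dF T f x y := by
    intro k
    induction k with
    | zero => exact ⟨∅, by simp⟩
    | succ k ih =>
      obtain ⟨s, hcard, hsY, hsep⟩ := ih
      obtain ⟨y, hyY, hy⟩ := hcon s hsY
      have hys : y ∉ s := fun h => by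
        have := hy y h
        have := dF_self_le T f y
        linarith
      refine ⟨insert y s, by rw [Finset.card_insert_of_notMem hys, hcard], ?_, ?_⟩
      · intro x hx
        rcases Finset.mem_insert.1 hx with rfl | h
        · exact hyY
        · exact hsY x h
      · intro x hx z hz hxz
        rcases Finset.mem_insert.1 hx with h1 | h1 <;> rcases Finset.mem_insert.1 hz with h2 | h2
        · exact absurd (h1.trans h2.symm) hxz
        · rw [h1, dF_comm]; exact hy z h2
        · rw [h2]; exact hy x h1
        · exact hsep x h1 z h2 hxz
  obtain ⟨s, hcard, hsY, hsep⟩ := build (n + 2)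
  obtain ⟨G, hG, hG0, hGB⟩ := exists_meas_full hae
  have hBm : ∀ x, MeasurableSet {y | dF T f x y ≤ ε} := fun x =>
    dF_ball_meas T (fun j => (hT j).measurable) f hfm ε x
  have hdisj : (s : Set X).PairwiseDisjoint (fun x => {y | dF T f x y ≤ ε} ∩ G) := by
    intro x hx z hz hxz
    refine Set.disjoint_left.2 ?_
    rintro y ⟨h1, hyG⟩ ⟨h2, _⟩
    have h3 := hsep x hx z hz hxz
    have h4 := dF_triangle (hY x (hsY x hx)).1 (hGB y hyG) (hY z (hsY z hz)).1
    have h1' : dF T f x y ≤ ε := h1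
    have h2' : dF T f z y ≤ ε := h2
    rw [dF_comm T f y z] at h4
    linarith
  have h5 := measure_biUnion_finset hdisj (fun x _ => (hBm x).inter hG) (μ := μ)
  have h6 : ∑ x ∈ s, (1 : ENNReal) / (n + 1) ≤ 1 := by
    refine le_trans ?_ (h5.symm.le.trans prob_le_one)
    refine Finset.sum_le_sum fun x hx => ?_
    rw [measure_inter_full hG0]
    exact (hY x (hsY x hx)).2
  rw [Finset.sum_const, hcard, nsmul_eq_mul, mul_one_div] at h6
  rw [ENNReal.div_le_iff (by simp) (by finiteness), one_mul] at h6
  have h7 : n + 2 ≤ n + 1 := by exact_mod_cast h6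
  omega

lemma equicont_of_not3 {d : ℕ} [MetricSpace X] [CompactSpace X] [MeasurableSpace X] [BorelSpace X]
    (T : (Fin d → ℤ) → X → X) (hTadd : ∀ i j, T (i + j) = T i ∘ T j)
    (μ : Measure X) [IsProbabilityMeasure μ] (hT : ∀ j, MeasurePreserving (T j) μ μ)
    (herg : ∀ A : Set X, MeasurableSet A → (∀ j, T j ⁻¹' A = A) → μ A = 0 ∨ μ A = 1)
    (f : X → ℂ) (hfm : Measurable f) (hf : MemLp f 2 μ)
    (h3 : ¬ ∃ ε : ℝ, 0 < ε ∧ ∀ᵐ x ∂μ, μ {y : X | dF T f x y ≤ ε} = 0) : MuFMeanEquicont μ T f := by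
  push Not at h3
  have hae : ∀ᵐ x ∂μ, Bp T f x := (ae_Bp T hTadd μ hT herg f hfm hf).mono fun _ h => h.1
  obtain ⟨G, hG, hG0, hGB⟩ := exists_meas_full hae
  have hdm := dF_meas T (fun j => (hT j).measurable) f hfm
  have hBm : ∀ ε x, MeasurableSet {y | dF T f x y ≤ ε} := fun ε x =>
    dF_ball_meas T (fun j => (hT j).measurable) f hfm ε x
  have step : ∀ ε : ℝ, 0 < ε → ∀ τ : ENNReal, τ ≠ 0 → ∃ M : Set X, IsCompact M ∧ ∃ δ : ℝ, 0 < δ ∧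
      μ Mᶜ ≤ τ ∧ ∀ x ∈ M, ∀ y ∈ M, dist x y ≤ δ → Bp T f x ∧ Bp T f y ∧ dF T f x y ≤ 4 * ε := by
    intro ε hε τ hτ
    let φ : X → ENNReal := fun x => μ {y | dF T f x y ≤ ε}
    have hφm : Measurable φ :=
      measurable_measure_prodMk_left (s := {p : X × X | dF T f p.1 p.2 ≤ ε})
        (measurableSet_le hdm measurable_const)
    let A : ℕ → Set X := fun n => {x | (1 : ENNReal) / (n + 1) ≤ φ x}
    have hAm : ∀ n, MeasurableSet (A n) := fun n => measurableSet_le measurable_const hφm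
    obtain ⟨n, hn⟩ : ∃ n, μ (A n) ≠ 0 := by
      by_contra hcon
      push Not at hcon
      apply h3 ε hε
      have : ∀ᵐ x ∂μ, ∀ n, x ∉ A n := ae_all_iff.2 fun n => measure_eq_zero_iff_ae_notMem.1 (hcon n)
      filter_upwards [this] with x hx
      by_contra hne
      obtain ⟨n, hn⟩ := ENNReal.exists_inv_nat_lt hne
      apply hx n
      change (1 : ENNReal) / (n + 1) ≤ μ {y | dF T f x y ≤ ε}
      refine le_trans ?_ hn.le
      rw [one_div]
      exact ENNReal.inv_le_inv.2 le_self_add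
    have hA1 : μ (A n) = 1 := by
      refine (zero_one_of_nonneg T hTadd μ hT herg (A n) (hAm n) fun i hi => ?_).resolve_left hn
      filter_upwards [hae] with x hx hxA
      have hle : φ x ≤ φ (T i x) := by
        change μ {y | dF T f x y ≤ ε} ≤ μ {y | dF T f (T i x) y ≤ ε}
        rw [← (hT i).measure_preimage (hBm ε (T i x)).nullMeasurableSet]
        refine measure_mono_ae ?_
        filter_upwards [hae] with y hy hxy
        exact (dF_shift hTadd hx hy i hi).trans hxy
      exact le_trans (show (1 : ENNReal) / (n + 1) ≤ φ x from hxA) hle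
    obtain ⟨s, hsY, hs⟩ := finite_cover T μ hT f hfm hae ε hε.le n (A n ∩ G)
      (fun x hx => ⟨hGB x hx.2, hx.1⟩)
    obtain ⟨M, hM, δ, hδ, hμ, hMd⟩ := compact_select μ (fun c => {y | dF T f c y ≤ 2 * ε} ∩ G)
      (fun c => (hBm _ c).inter hG) s τ hτ
    refine ⟨M, hM, δ, hδ, ?_, ?_⟩
    · have hsub : Mᶜ ⊆ ((⋃ c ∈ s, {y | dF T f c y ≤ 2 * ε} ∩ G) \ M) ∪ (A n ∩ G)ᶜ := by
        intro y hy
        by_cases hyA : y ∈ A n ∩ G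
        · left
          obtain ⟨c, hc, hcy⟩ := hs y hyA
          exact ⟨Set.mem_biUnion hc ⟨hcy, hyA.2⟩, hy⟩
        · right; exact hyA
      have h0 : μ (A n ∩ G)ᶜ = 0 := by
        rw [prob_compl_eq_zero_iff ((hAm n).inter hG), measure_inter_full hG0, hA1]
      calc μ Mᶜ ≤ _ := measure_mono hsub
        _ ≤ _ := measure_union_le _ _
        _ ≤ τ := by rw [h0, add_zero]; exact hμ
    · intro x hx y hy hxy
      obtain ⟨c, hc, ⟨h1, hxG⟩, ⟨h2, hyG⟩⟩ := hMd x hx y hy hxy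
      refine ⟨hGB x hxG, hGB y hyG, ?_⟩
      have h4 := dF_triangle (hGB x hxG) (hGB c (hsY c hc).2) (hGB y hyG)
      have h1' : dF T f c x ≤ 2 * ε := h1
      have h2' : dF T f c y ≤ 2 * ε := h2
      rw [dF_comm T f x c] at h4
      linarith
  intro τ hτ
  obtain ⟨τ', hτ'0, hτ'⟩ := ENNReal.exists_pos_sum_of_countable (ENNReal.ofReal_pos.2 hτ).ne' ℕ
  choose M hMc δ hδ hμ hM using fun m : ℕ => step (1 / ((m : ℝ) + 1)) (by positivity) (τ' m)
    (by exact_mod_cast (hτ'0 m).ne')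
  refine ⟨⋂ m, M m, (isClosed_iInter fun m => (hMc m).isClosed).isCompact, ?_, ?_⟩
  · have hc : μ (⋂ m, M m)ᶜ ≤ ENNReal.ofReal τ := by
      rw [Set.compl_iInter]
      calc _ ≤ ∑' m, μ (M m)ᶜ := measure_iUnion_le _
        _ ≤ ∑' m, (τ' m : ENNReal) := ENNReal.tsum_le_tsum hμ
        _ ≤ _ := hτ'.le
    rw [tsub_le_iff_right]
    calc (1 : ENNReal) = μ Set.univ := measure_univ.symm
      _ = μ ((⋂ m, M m) ∪ (⋂ m, M m)ᶜ) := by rw [Set.union_compl_self]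
      _ ≤ _ := measure_union_le _ _
      _ ≤ _ := by gcongr
  · intro ε hε
    obtain ⟨a, ha, haε⟩ : ∃ a : ℝ, 0 < a ∧ a ^ 2 < ε ^ 3 := by
      refine ⟨Real.sqrt (ε ^ 3 / 2), Real.sqrt_pos.2 (by positivity), ?_⟩
      rw [Real.sq_sqrt (by positivity)]
      exact half_lt_self (by positivity)
    obtain ⟨m, hm⟩ := exists_nat_one_div_lt (show 0 < a / 4 by positivity)
    refine ⟨δ m, hδ m, fun x hx y hy hxy => ?_⟩
    obtain ⟨h1, h2, h4⟩ := hM m x (Set.mem_iInter.1 hx m) y (Set.mem_iInter.1 hy m) hxy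
    exact rhoF_le_of_dF h1 h2 hε (lt_of_le_of_lt h4 (by linarith)) haε

lemma not_equicont_of_sens {d : ℕ} [MetricSpace X] [CompactSpace X] [MeasurableSpace X] [BorelSpace X]
    (T : (Fin d → ℤ) → X → X) (hTadd : ∀ i j, T (i + j) = T i ∘ T j)
    (μ : Measure X) [IsProbabilityMeasure μ] (hT : ∀ j, MeasurePreserving (T j) μ μ)
    (herg : ∀ A : Set X, MeasurableSet A → (∀ j, T j ⁻¹' A = A) → μ A = 0 ∨ μ A = 1)
    (f : X → ℂ) (hfm : Measurable f) (hf : MemLp f 2 μ)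
    (hs : MeanSensitiveFun μ T f) : ¬ MuFMeanEquicont μ T f := by
  intro heq
  obtain ⟨ε, hε, hsens⟩ := hs
  obtain ⟨K, hK⟩ := ((tail_tendsto μ f hfm hf).eventually_lt_const
    (show (0 : ℝ) < ε ^ 2 / 16 by positivity)).exists
  obtain ⟨η, hη, hη2⟩ := dF_le_of_rhoF (T := T) hε K hK
  obtain ⟨G, hG, hG0, hGB⟩ := exists_meas_full
    (goodE_L1 T hTadd μ hT herg (tail f K) (tail_meas f hfm K) (tail_int μ f hfm hf K))
  obtain ⟨M, hM, hMμ, hM2⟩ := heq (1 / 2) (by norm_num)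
  obtain ⟨δ, hδ, hMδ⟩ := hM2 η hη
  have hpos : 0 < μ (M ∩ G) := by
    rw [measure_inter_full hG0]
    refine lt_of_lt_of_le ?_ hMμ
    rw [tsub_pos_iff_lt, ENNReal.ofReal_lt_one]
    norm_num
  obtain ⟨t, _, htf, htc⟩ := finite_cover_balls_of_compact (isCompact_univ (X := X)) (half_pos hδ)
  obtain ⟨c, hc, hcpos⟩ : ∃ c ∈ t, μ (M ∩ G ∩ ball c (δ / 2)) ≠ 0 := by
    by_contra hcon
    push Not at hcon
    have h0 : μ (⋃ c ∈ t, M ∩ G ∩ ball c (δ / 2)) = 0 :=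
      (measure_biUnion_null_iff htf.countable).2 hcon
    refine hpos.ne' (measure_mono_null ?_ h0)
    intro x hx
    obtain ⟨c, hc, hxc⟩ := Set.mem_iUnion₂.1 (htc (Set.mem_univ x))
    exact Set.mem_biUnion hc ⟨hx, hxc⟩
  obtain ⟨x, hx, y, hy, _, _, hxy⟩ := hsens _ ((hM.measurableSet.inter hG).inter measurableSet_ball)
    (pos_iff_ne_zero.2 hcpos)
  have hd : dist x y ≤ δ := by
    have h1 : dist x c < δ / 2 := hx.2
    have h2 : dist y c < δ / 2 := hy.2
    have := dist_triangle_right x y c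
    linarith
  have := hη2 x y (hGB x hx.1.2) (hGB y hy.1.2) (hMδ x hx.1.1 y hy.1.1 hd)
  linarith

theorem tfae_meas {d : ℕ} [MetricSpace X] [CompactSpace X] [MeasurableSpace X] [BorelSpace X]
    (T : (Fin d → ℤ) → X → X) (hTadd : ∀ i j, T (i + j) = T i ∘ T j)
    (μ : Measure X) [IsProbabilityMeasure μ] (hT : ∀ j, MeasurePreserving (T j) μ μ)
    (herg : ∀ A : Set X, MeasurableSet A → (∀ j, T j ⁻¹' A = A) → μ A = 0 ∨ μ A = 1)
    (f : X → ℂ) (hfm : Measurable f) (hf : MemLp f 2 μ) :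
    [MeanSensitiveFun μ T f,
     MeanExpansiveFun μ T f,
     ∃ ε : ℝ, 0 < ε ∧ ∀ᵐ x ∂μ, μ {y : X | dF T f x y ≤ ε} = 0,
     ¬ MuFMeanEquicont μ T f].TFAE := by
  have hdm := dF_meas T (fun j => (hT j).measurable) f hfm
  tfae_have 2 ↔ 3 := by
    refine exists_congr fun ε => and_congr_right fun _ => ?_
    rw [← prob_compl_eq_zero_iff (measurableSet_lt measurable_const hdm),
      Measure.measure_prod_null (measurableSet_lt measurable_const hdm).compl]
    refine eventually_congr (Eventually.of_forall fun x => ?_)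
    have : Prod.mk x ⁻¹' {p : X × X | ε < dF T f p.1 p.2}ᶜ = {y | dF T f x y ≤ ε} := by
      ext y; exact not_lt (a := ε) (b := dF T f x y)
    change μ (Prod.mk x ⁻¹' {p : X × X | ε < dF T f p.1 p.2}ᶜ) = 0 ↔ _
    rw [this]
  tfae_have 3 → 1 := by
    rintro ⟨ε, hε, h⟩
    refine ⟨ε, hε, fun A hA hpos => ?_⟩
    obtain ⟨G, hG, hG0, hGB⟩ := exists_meas_full ((ae_Bp T hTadd μ hT herg f hfm hf).and h)
    have hpos' : μ (A ∩ G) ≠ 0 := by rw [measure_inter_full hG0]; exact hpos.ne'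
    obtain ⟨x, hxA, hxG⟩ := nonempty_of_measure_ne_zero hpos'
    by_contra hcon
    push Not at hcon
    refine hpos' (measure_mono_null ?_ (hGB x hxG).2)
    rintro y ⟨hyA, hyG⟩
    exact hcon x hxA y hyA (hGB x hxG).1.2 (hGB y hyG).1.2
  tfae_have 1 → 4 := not_equicont_of_sens T hTadd μ hT herg f hfm hf
  tfae_have 4 → 3 := fun h => by
    by_contra h3
    exact h (equicont_of_not3 T hTadd μ hT herg f hfm hf h3)
  tfae_finish

section Transfer

variable {d : ℕ} [MeasurableSpace X] {T : (Fin d → ℤ) → X → X} {μ : Measure X}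

lemma dF_congr {f g : X → ℂ} {x y : X} (hx : ∀ j, f (T j x) = g (T j x))
    (hy : ∀ j, f (T j y) = g (T j y)) : dF T f x y = dF T g x y := by
  unfold dF; simp only [hx, hy]

lemma rhoF_congr {f g : X → ℂ} {x y : X} (hx : ∀ j, f (T j x) = g (T j x))
    (hy : ∀ j, f (T j y) = g (T j y)) : rhoF T f x y = rhoF T g x y := by
  unfold rhoF; simp only [hx, hy]

lemma genericSq_congr {f g : X → ℂ} (h : f =ᵐ[μ] g) {x : X} (hx : ∀ j, f (T j x) = g (T j x)) :
    genericSq μ T f x → genericSq μ T g x := by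
  unfold genericSq
  have : ∫ y, ‖f y‖ ^ 2 ∂μ = ∫ y, ‖g y‖ ^ 2 ∂μ :=
    integral_congr_ae (h.mono fun x hx => by simp only [hx])
  simp only [hx, this]
  exact id

lemma sens_congr (hT : ∀ j, MeasurePreserving (T j) μ μ) {f g : X → ℂ} (h : f =ᵐ[μ] g)
    (hs : MeanSensitiveFun μ T f) : MeanSensitiveFun μ T g := by
  obtain ⟨G, hG, hG0, hGB⟩ := exists_meas_full (ae_all_T hT h)
  obtain ⟨ε, hε, H⟩ := hs
  refine ⟨ε, hε, fun A hA hpos => ?_⟩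
  obtain ⟨x, hx, y, hy, h1, h2, h3⟩ := H (A ∩ G) (hA.inter hG) (by rwa [measure_inter_full hG0])
  refine ⟨x, hx.1, y, hy.1, genericSq_congr h (hGB x hx.2) h1, genericSq_congr h (hGB y hy.2) h2, ?_⟩
  rwa [← dF_congr (hGB x hx.2) (hGB y hy.2)]

lemma exp_congr [IsProbabilityMeasure μ] (hT : ∀ j, MeasurePreserving (T j) μ μ) {f g : X → ℂ}
    (h : f =ᵐ[μ] g) (hs : MeanExpansiveFun μ T f) : MeanExpansiveFun μ T g := by
  obtain ⟨ε, hε, H⟩ := hs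
  refine ⟨ε, hε, ?_⟩
  rw [← H]
  refine measure_congr (Eventually.set_eq ?_)
  have h0 := ae_all_T hT h
  filter_upwards [Measure.quasiMeasurePreserving_fst.ae h0,
    Measure.quasiMeasurePreserving_snd.ae h0] with p h1 h2
  change ε < dF T g p.1 p.2 ↔ ε < dF T f p.1 p.2
  rw [dF_congr h1 h2]

lemma three_congr (hT : ∀ j, MeasurePreserving (T j) μ μ) {f g : X → ℂ}
    (h : f =ᵐ[μ] g) (hs : ∃ ε : ℝ, 0 < ε ∧ ∀ᵐ x ∂μ, μ {y : X | dF T f x y ≤ ε} = 0) :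
    ∃ ε : ℝ, 0 < ε ∧ ∀ᵐ x ∂μ, μ {y : X | dF T g x y ≤ ε} = 0 := by
  obtain ⟨ε, hε, H⟩ := hs
  refine ⟨ε, hε, ?_⟩
  have h0 := ae_all_T hT h
  filter_upwards [H, h0] with x hx hx2
  rw [← hx]
  refine measure_congr (Eventually.set_eq ?_)
  filter_upwards [h0] with y hy
  change dF T g x y ≤ ε ↔ dF T f x y ≤ ε
  rw [dF_congr hx2 hy]

end Transfer

lemma equi_congr {d : ℕ} [MetricSpace X] [CompactSpace X] [MeasurableSpace X] [BorelSpace X]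
    {T : (Fin d → ℤ) → X → X} {μ : Measure X} [IsProbabilityMeasure μ]
    (hT : ∀ j, MeasurePreserving (T j) μ μ) {f g : X → ℂ}
    (h : f =ᵐ[μ] g) (hs : MuFMeanEquicont μ T f) : MuFMeanEquicont μ T g := by
  obtain ⟨G, hG, hG0, hGB⟩ := exists_meas_full (ae_all_T hT h)
  intro τ hτ
  obtain ⟨M, hM, hMμ, H⟩ := hs (τ / 2) (half_pos hτ)
  obtain ⟨K, hKs, hK, hKμ⟩ := (hM.measurableSet.inter hG).exists_isCompact_sdiff_lt
      (measure_ne_top μ _) (ENNReal.ofReal_pos.2 (half_pos hτ)).ne'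
  refine ⟨K, hK, ?_, fun ε hε => ?_⟩
  · have h1 : μ M ≤ μ K + ENNReal.ofReal (τ / 2) := by
      rw [← measure_inter_full (A := M) hG0]
      calc μ (M ∩ G) ≤ μ (K ∪ (M ∩ G) \ K) := measure_mono (by rw [Set.union_sdiff_self]; exact Set.subset_union_right)
        _ ≤ _ := measure_union_le _ _
        _ ≤ _ := by gcongr
    rw [tsub_le_iff_right] at hMμ ⊢
    calc (1 : ENNReal) ≤ μ M + ENNReal.ofReal (τ / 2) := hMμ
      _ ≤ μ K + ENNReal.ofReal (τ / 2) + ENNReal.ofReal (τ / 2) := by gcongr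
      _ = μ K + ENNReal.ofReal τ := by
        rw [add_assoc, ← ENNReal.ofReal_add (by positivity) (by positivity), add_halves]
  · obtain ⟨δ, hδ, Hδ⟩ := H ε hε
    refine ⟨δ, hδ, fun x hx y hy hxy => ?_⟩
    rw [← rhoF_congr (hGB x (hKs hx).2) (hGB y (hKs hy).2)]
    exact Hδ x (hKs hx).1 y (hKs hy).1 hxy


/-- for a TDS with an ergodic invariant measure `μ` and `f ∈ L²(X,μ)`,
the following are equivalent: (1) `μ-f`-mean sensitivity; (2) `μ-f`-mean expansivity;
(3) `∃ ε > 0` with `μ(B_ε^f(x)) = 0` for a.e. `x`; (4) not `μ-f`-mean equicontinuous. -/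
theorem stmt16 {d : ℕ}
    [MetricSpace X] [CompactSpace X] [MeasurableSpace X] [BorelSpace X]
    (T : (Fin d → ℤ) → X → X)
    (hTc : ∀ j, Continuous (T j))
    (hTadd : ∀ i j, T (i + j) = T i ∘ T j)
    (μ : Measure X) [IsProbabilityMeasure μ]
    (hT : ∀ j, MeasurePreserving (T j) μ μ)
    (herg : ∀ A : Set X, MeasurableSet A → (∀ j, T j ⁻¹' A = A) → μ A = 0 ∨ μ A = 1)
    (f : X → ℂ) (hf : MemLp f 2 μ) :
    [MeanSensitiveFun μ T f,
     MeanExpansiveFun μ T f,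
     ∃ ε : ℝ, 0 < ε ∧ ∀ᵐ x ∂μ, μ {y : X | dF T f x y ≤ ε} = 0,
     ¬ MuFMeanEquicont μ T f].TFAE := by
  have hg : f =ᵐ[μ] hf.1.mk f := hf.1.ae_eq_mk
  have hgm : Measurable (hf.1.mk f) := hf.1.stronglyMeasurable_mk.measurable
  have main := tfae_meas T hTadd μ hT herg (hf.1.mk f) hgm ((memLp_congr_ae hg).1 hf)
  have e1 : MeanSensitiveFun μ T f ↔ MeanSensitiveFun μ T (hf.1.mk f) :=
    ⟨sens_congr hT hg, sens_congr hT hg.symm⟩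
  have e2 : MeanExpansiveFun μ T f ↔ MeanExpansiveFun μ T (hf.1.mk f) :=
    ⟨exp_congr hT hg, exp_congr hT hg.symm⟩
  have e3 : (∃ ε : ℝ, 0 < ε ∧ ∀ᵐ x ∂μ, μ {y : X | dF T f x y ≤ ε} = 0) ↔
      (∃ ε : ℝ, 0 < ε ∧ ∀ᵐ x ∂μ, μ {y : X | dF T (hf.1.mk f) x y ≤ ε} = 0) :=
    ⟨three_congr hT hg, three_congr hT hg.symm⟩
  have e4 : MuFMeanEquicont μ T f ↔ MuFMeanEquicont μ T (hf.1.mk f) :=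
    ⟨equi_congr hT hg, equi_congr hT hg.symm⟩
  rw [e1, e2, e3, e4]
  exact main
end
end
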